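/- Let K be an algebraically closed field, let n >= 1, let z in FPF_n(I_n), and let (p,q) be an outer corner of dom(z) with n >= p > q. Then: (1) Psi(z,p) is contained in FPF_n(I_n); (2) I(X^ss_z) + (u_{pq}) is contained in the intersection over v in Psi(z,p) of I(X^ss_v); and (3) J^ss_z + (u_{pq}) equals the intersection over v in Psi(z,p) of J^ss_v, where (u_{pq}) denotes the principal ideal of R_n generated by the variable u_{pq}. -/

import Mathlib

namespace Paper

/-!
We model a permutation of the positive integers `{1, 2, 3, ...}` as an `Equiv.Perm ℕ`
that fixes `0`; all notions below refer only to positive inputs.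
-/

/-- The rank `r_w(i,j) = #{a ∈ [i] : w(a) ∈ [j]}` of the `i × j` partial
permutation matrix of `w`, where `[k] = {1, ..., k}`. -/
def rnk (w : Equiv.Perm ℕ) (i j : ℕ) : ℕ :=
  ((Finset.Icc 1 i).filter fun a => w a ∈ Finset.Icc 1 j).card

/-- Right descent set `Des_R(w) = {i ≥ 1 : w(i) > w(i+1)}`. -/
def DesR (w : Equiv.Perm ℕ) : Set ℕ := {i | 1 ≤ i ∧ w (i + 1) < w i}

/-- Left descent set `Des_L(w) = Des_R(w⁻¹)`. -/
def DesL (w : Equiv.Perm ℕ) : Set ℕ := DesR w⁻¹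

/-- `S_∞`: permutations of the positive integers fixing all but finitely many points. -/
def SInfty : Set (Equiv.Perm ℕ) :=
  {w | w 0 = 0 ∧ Set.Finite {i : ℕ | w i ≠ i}}

/-- `S^{m,n}_∞ = {w ∈ S_∞ : Des_R(w) ⊆ [m], Des_L(w) ⊆ [n]}`. -/
def SmnInfty (m n : ℕ) : Set (Equiv.Perm ℕ) :=
  {w | w ∈ SInfty ∧ DesR w ⊆ Set.Icc 1 m ∧ DesL w ⊆ Set.Icc 1 n}

/-- The Rothe diagram `D(w) = {(i,j) : 0 < j < w(i), 0 < i < w⁻¹(j)}`. -/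
def Rothe (w : Equiv.Perm ℕ) : Set (ℕ × ℕ) :=
  {p | 0 < p.2 ∧ p.2 < w p.1 ∧ 0 < p.1 ∧ p.1 < w⁻¹ p.2}

/-- The function `1_FPF`, sending `i ↦ i - (-1)^i` on positive integers (it fixes `0`). -/
def oneFPF : ℕ → ℕ := fun i => if i % 2 = 1 then i + 1 else i - 1

/-- `I^FPF_∞`: fixed-point-free involutions of the positive integers agreeing with
`1_FPF` at all sufficiently large inputs. -/
def IFPFInfty : Set (Equiv.Perm ℕ) :=
  {z | z 0 = 0 ∧ (∀ i, 1 ≤ i → z i ≠ i) ∧ z * z = 1 ∧ ∃ N, ∀ i, N ≤ i → z i = oneFPF i}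

/-- The skew-symmetric Rothe diagram `D^ss(z) = {(i,j) : 0 < j < z(i), j < i < z(j)}`. -/
def Dss (z : Equiv.Perm ℕ) : Set (ℕ × ℕ) :=
  {p | 0 < p.2 ∧ p.2 < z p.1 ∧ p.2 < p.1 ∧ p.1 < z p.2}

/-- `FPF_n(I_n) = {z ∈ I^FPF_∞ : D^ss(z) ⊆ [n] × [n]}`. -/
def FPFIn (n : ℕ) : Set (Equiv.Perm ℕ) :=
  {z | z ∈ IFPFInfty ∧ Dss z ⊆ Set.Icc 1 n ×ˢ Set.Icc 1 n}

/-- `ℓ_fpf(z) = |D^ss(z)|`. -/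
noncomputable def ellFpf (z : Equiv.Perm ℕ) : ℕ := (Dss z).ncard

/-- Bruhat order on `I^FPF_∞`: reflexive-transitive closure of `z < (i,j) z (i,j)`
whenever `i < j` and `ℓ_fpf` goes up by exactly one. -/
def fpfBruhatLe (z y : Equiv.Perm ℕ) : Prop :=
  Relation.ReflTransGen
    (fun a b => ∃ i j : ℕ, 1 ≤ i ∧ i < j ∧
      b = Equiv.swap i j * a * Equiv.swap i j ∧ ellFpf b = ellFpf a + 1) z y

/-- `i` is a visible descent of `z` if `i ≥ 1` and `z(i+1) < min(i, z(i))`. -/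
def visibleDescent (z : Equiv.Perm ℕ) (i : ℕ) : Prop :=
  1 ≤ i ∧ z (i + 1) < min i (z i)

/-- `Ψ(z, p) = {(p,r) z (p,r) : r > p, ℓ_fpf((p,r) z (p,r)) = ℓ_fpf(z) + 1}`. -/
def PsiSet (z : Equiv.Perm ℕ) (p : ℕ) : Set (Equiv.Perm ℕ) :=
  {y | ∃ r : ℕ, p < r ∧ y = Equiv.swap p r * z * Equiv.swap p r ∧ ellFpf y = ellFpf z + 1}

/-- The dominant component `dom(z) = {(i,j) : i, j ≥ 1, r_z(i,j) = 0}`. -/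
def domSet (z : Equiv.Perm ℕ) : Set (ℕ × ℕ) :=
  {p | 1 ≤ p.1 ∧ 1 ≤ p.2 ∧ rnk z p.1 p.2 = 0}

/-- `(p, q)` is an outer corner of `dom(z)`. -/
def IsOuterCorner (z : Equiv.Perm ℕ) (p q : ℕ) : Prop :=
  1 ≤ p ∧ 1 ≤ q ∧ (p, q) ∉ domSet z ∧
    (p = 1 ∨ (p - 1, q) ∈ domSet z) ∧ (q = 1 ∨ (p, q - 1) ∈ domSet z)

/-- `I_n`: involutions in `S_∞` fixing every `i > n`. -/
def InvolIn (n : ℕ) : Set (Equiv.Perm ℕ) :=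
  {w | w 0 = 0 ∧ w * w = 1 ∧ ∀ i, n < i → w i = i}

/-- The fixed points of `z` lying in `[n]`. -/
def fixedPtsIn (n : ℕ) (z : Equiv.Perm ℕ) : Finset ℕ :=
  (Finset.Icc 1 n).filter fun i => z i = i

/-- The function swapping `m + 2t - 1` and `m + 2t` for every `t ≥ 1`, fixing all other points. -/
def tailSwapFun (m : ℕ) : ℕ → ℕ := fun i =>
  if i ≤ m then i else if (i - m) % 2 = 1 then i + 1 else i - 1

theorem tailSwapFun_involutive (m : ℕ) : Function.Involutive (tailSwapFun m) := by
  intro i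
  unfold tailSwapFun
  split_ifs <;> omega

/-- The involution swapping `m + 2t - 1` and `m + 2t` for every `t ≥ 1`. -/
def tailSwap (m : ℕ) : Equiv.Perm ℕ :=
  Function.Involutive.toPerm _ (tailSwapFun_involutive m)

/-- The fixed-point-free standardization `FPF_n(z) = z ⋅ (i_1,n+1)⋯(i_k,n+k) ⋅ c`,
where `i_1 < ⋯ < i_k` are the fixed points of `z` in `[n]` and `c` swaps
`n+k+2t-1, n+k+2t` for all `t ≥ 1`. -/
noncomputable def fpfStd (n : ℕ) (z : Equiv.Perm ℕ) : Equiv.Perm ℕ :=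
  z *
    (List.ofFn fun t : Fin (fixedPtsIn n z).card =>
      Equiv.swap ((fixedPtsIn n z).orderEmbOfFin rfl t) (n + (t : ℕ) + 1)).prod *
    tailSwap (n + (fixedPtsIn n z).card)

/-- `Mat^ss_n(K)`: skew-symmetric `n × n` matrices (transpose is the negative, zero diagonal).
Row/column index `a : Fin n` corresponds to the (1-indexed) row/column `a + 1`. -/
def MatSS (K : Type*) [CommRing K] (n : ℕ) : Set (Matrix (Fin n) (Fin n) K) :=
  {A | A.transpose = -A ∧ ∀ i, A i i = 0}

/-- The skew-symmetric matrix Schubert variety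
`X^ss_z = {A ∈ Mat^ss_n : rank A_{[i][j]} ≤ r_z(i,j) for all i, j ∈ [n]}`. -/
noncomputable def Xss (K : Type*) [Field K] (n : ℕ) (z : Equiv.Perm ℕ) :
    Set (Matrix (Fin n) (Fin n) K) :=
  {A | A ∈ MatSS K n ∧ ∀ (i j : ℕ) (hi : i ≤ n) (hj : j ≤ n), 1 ≤ i → 1 ≤ j →
    (A.submatrix (Fin.castLE hi) (Fin.castLE hj)).rank ≤ rnk z i j}

/-- `#{(i,j) : i > j, j < z(i), i < z(j)}` for a permutation of `Fin N`
(the `0`-indexed version of `ℓ_fpf`). -/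
def ellFpfFin {N : ℕ} (z : Equiv.Perm (Fin N)) : ℕ :=
  (Finset.univ.filter fun p : Fin N × Fin N => p.2 < p.1 ∧ p.2 < z p.1 ∧ p.1 < z p.2).card

/-- The Pfaffian of an `N × N` matrix:
`pf(A) = ∑_{z fpf involution of [N]} (-1)^{ℓ_fpf(z)} ∏_{z(i) < i} A_{z(i), i}`.
(The sum is empty, hence `0`, when `N` is odd.) -/
noncomputable def Pfaffian {R : Type*} [CommRing R] {N : ℕ} (A : Matrix (Fin N) (Fin N) R) : R :=
  ∑ z ∈ Finset.univ.filter (fun z : Equiv.Perm (Fin N) => (∀ i, z i ≠ i) ∧ ∀ i, z (z i) = i),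
    (-1 : R) ^ ellFpfFin z * ∏ i ∈ Finset.univ.filter (fun i : Fin N => z i < i), A (z i) i

/-- Index set for the variables `u_{ij}`, `n ≥ i > j ≥ 1`, of the coordinate ring
`R_n = K[Mat^ss_n]`; the variable `⟨(a, b), _⟩` is `u_{a+1, b+1}`. -/
abbrev SSVar (n : ℕ) : Type := {p : Fin n × Fin n // p.2 < p.1}

/-- The generic skew-symmetric matrix `U^ss` over `R_n`. -/
noncomputable def Uss (K : Type*) [CommRing K] (n : ℕ) :
    Matrix (Fin n) (Fin n) (MvPolynomial (SSVar n) K) :=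
  Matrix.of fun i j =>
    if h : j < i then MvPolynomial.X ⟨(i, j), h⟩
    else if h' : i < j then -MvPolynomial.X ⟨(j, i), h'⟩
    else 0

/-- The ideal of polynomials vanishing on a set `X`, where a point `A` is evaluated
via `ev A : σ → K`. -/
noncomputable def vanishingIdeal {K : Type*} [CommRing K] {σ M : Type*}
    (X : Set M) (ev : M → σ → K) : Ideal (MvPolynomial σ K) where
  carrier := {f | ∀ A ∈ X, MvPolynomial.eval (ev A) f = 0}
  zero_mem' := by simp
  add_mem' := by
    intro f g hf hg
    simp only [Set.mem_setOf_eq] at *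
    intro A hA
    rw [map_add, hf A hA, hg A hA, add_zero]
  smul_mem' := by
    intro c f hf
    simp only [Set.mem_setOf_eq] at *
    intro A hA
    rw [smul_eq_mul, map_mul, hf A hA, mul_zero]

/-- `I(X^ss_z) ⊆ R_n`, where `u_{ij}` is evaluated at `A` as `A_{ij}`. -/
noncomputable def IXss (K : Type*) [Field K] (n : ℕ) (z : Equiv.Perm ℕ) :
    Ideal (MvPolynomial (SSVar n) K) :=
  vanishingIdeal (Xss K n z) fun A v => A v.1.1 v.1.2

/-- `pf(U^ss_{RR})` for a finite row/column set `R` (listed in increasing order). -/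
noncomputable def pfUss (K : Type*) [CommRing K] {n : ℕ} (R : Finset (Fin n)) :
    MvPolynomial (SSVar n) K :=
  Pfaffian ((Uss K n).submatrix (fun s => R.orderEmbOfFin rfl s) fun t => R.orderEmbOfFin rfl t)

/-- The ideal `I^ss_z`, generated by the Pfaffians `pf(U^ss_{RR})` over all nonempty
even-size `R ⊆ [n]` such that `R ⊆ [i]` and `|R ∩ [j]| > r_z(i,j)` for some `i ≥ j`. -/
noncomputable def IssIdeal (K : Type*) [Field K] (n : ℕ) (z : Equiv.Perm ℕ) :
    Ideal (MvPolynomial (SSVar n) K) :=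
  Ideal.span {f : MvPolynomial (SSVar n) K | ∃ R : Finset (Fin n),
    R.Nonempty ∧ Even R.card ∧
    (∃ i j : ℕ, 1 ≤ j ∧ j ≤ i ∧ i ≤ n ∧ (∀ a ∈ R, (a : ℕ) + 1 ≤ i) ∧
      rnk z i j < (R.filter fun a : Fin n => (a : ℕ) + 1 ≤ j).card) ∧
    f = pfUss K R}

/-- The square-free monomial `u^ss_{AB}`: zero if `A ⊙ B` meets the diagonal, and otherwise
the product of the variables `u_{ij}` over the pairs `i > j` with `(i,j)` or `(j,i)` in
`A ⊙ B = {(a_0, b_r), (a_1, b_{r-1}), ..., (a_r, b_0)}`. -/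
noncomputable def ussMon (K : Type*) [CommRing K] {n : ℕ} (A B : Finset (Fin n)) :
    MvPolynomial (SSVar n) K :=
  if h : A.card = B.card then
    if ∃ t : Fin A.card, (A.orderEmbOfFin rfl t : Fin n) = B.orderEmbOfFin h.symm t.rev then 0
    else
      ∏ v ∈ Finset.univ.filter (fun v : SSVar n => ∃ t : Fin A.card,
          (A.orderEmbOfFin rfl t = v.1.1 ∧ B.orderEmbOfFin h.symm t.rev = v.1.2) ∨
          (A.orderEmbOfFin rfl t = v.1.2 ∧ B.orderEmbOfFin h.symm t.rev = v.1.1)),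
        MvPolynomial.X v
  else 0

/-- The monomial ideal `J^ss_r` of a symmetric rank table `r`, generated by the monomials
`u^ss_{AB}` with `A ⊆ [i]`, `B ⊆ [j]`, `|A| = |B| = r(i,j) + 1` for some `n ≥ i ≥ j ≥ 1`. -/
noncomputable def JssIdealOfTable (K : Type*) [CommRing K] (n : ℕ) (r : ℕ → ℕ → ℕ) :
    Ideal (MvPolynomial (SSVar n) K) :=
  Ideal.span {g : MvPolynomial (SSVar n) K | ∃ (i j : ℕ) (A B : Finset (Fin n)),
    1 ≤ j ∧ j ≤ i ∧ i ≤ n ∧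
    (∀ a ∈ A, (a : ℕ) + 1 ≤ i) ∧ (∀ b ∈ B, (b : ℕ) + 1 ≤ j) ∧
    A.card = r i j + 1 ∧ B.card = r i j + 1 ∧ g = ussMon K A B}

/-- `J^ss_z = J^ss_{r_z}`. -/
noncomputable def JssIdeal (K : Type*) [CommRing K] (n : ℕ) (z : Equiv.Perm ℕ) :
    Ideal (MvPolynomial (SSVar n) K) :=
  JssIdealOfTable K n (rnk z)

/-- Total degree of a monomial (exponent vector). -/
def totalDeg {σ : Type*} (m : σ →₀ ℕ) : ℕ := m.sum fun _ e => e

/-- The lexicographic order on the variables `u_{ij}` by the pair `(i, j)`. -/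
def varLT {n : ℕ} (v w : SSVar n) : Prop :=
  v.1.1 < w.1.1 ∨ (v.1.1 = w.1.1 ∧ v.1.2 < w.1.2)

/-- The (graded) reverse lexicographic term order on monomials of `R_n`:
`m₁ < m₂` iff `deg m₁ < deg m₂`, or the degrees agree and the lexicographically largest
variable with different exponents has strictly larger exponent in `m₁`. -/
def revlexLT {n : ℕ} (m₁ m₂ : SSVar n →₀ ℕ) : Prop :=
  totalDeg m₁ < totalDeg m₂ ∨
    (totalDeg m₁ = totalDeg m₂ ∧ ∃ v, m₂ v < m₁ v ∧ ∀ w, varLT v w → m₁ w = m₂ w)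

/-- The initial ideal of `I` with respect to a strict term order `lt`: the ideal
generated by the leading monomials `init(f)` of the nonzero `f ∈ I`. -/
noncomputable def initIdeal {K : Type*} [CommRing K] {σ : Type*}
    (lt : (σ →₀ ℕ) → (σ →₀ ℕ) → Prop) (I : Ideal (MvPolynomial σ K)) :
    Ideal (MvPolynomial σ K) :=
  Ideal.span {g : MvPolynomial σ K | ∃ f ∈ I, f ≠ 0 ∧ ∃ m : σ →₀ ℕ, m ∈ f.support ∧
    (∀ m' ∈ f.support, m' ≠ m → lt m' m) ∧ g = MvPolynomial.monomial m (1 : K)}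

/-- A term order on the monomials of a polynomial ring: a linear order in which `1` is
the unique minimum and multiplication by a fixed monomial preserves order. -/
structure TermOrder (σ : Type*) where
  le : (σ →₀ ℕ) → (σ →₀ ℕ) → Prop
  trans : ∀ a b c, le a b → le b c → le a c
  antisymm : ∀ a b, le a b → le b a → a = b
  total : ∀ a b, le a b ∨ le b a
  zero_le : ∀ a, le 0 a
  add_le_add_right : ∀ a b c, le a b → le (a + c) (b + c)

/-- The initial ideal of `I` with respect to a term order `τ`. -/
noncomputable def initIdealLe {K : Type*} [CommRing K] {σ : Type*}
    (τ : TermOrder σ) (I : Ideal (MvPolynomial σ K)) : Ideal (MvPolynomial σ K) :=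
  Ideal.span {g : MvPolynomial σ K | ∃ f ∈ I, f ≠ 0 ∧ ∃ m : σ →₀ ℕ, m ∈ f.support ∧
    (∀ m' ∈ f.support, τ.le m' m) ∧ g = MvPolynomial.monomial m (1 : K)}

/-- An ideal is homogeneous (w.r.t. total degree) iff it contains all homogeneous
components of its elements. -/
def IsHomogIdeal {K : Type*} [CommSemiring K] {σ : Type*}
    (I : Ideal (MvPolynomial σ K)) : Prop :=
  ∀ f ∈ I, ∀ d : ℕ, MvPolynomial.homogeneousComponent d f ∈ I

/-- The reading order on boxes: rows top to bottom, each row right to left. -/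
def pdRel (p q : ℕ × ℕ) : Prop := p.1 < q.1 ∨ (p.1 = q.1 ∧ q.2 ≤ p.2)

instance : DecidableRel pdRel := fun p q => by unfold pdRel; infer_instance

instance : IsTrans (ℕ × ℕ) pdRel :=
  ⟨fun a b c hab hbc => by unfold pdRel at *; omega⟩

instance : IsAntisymm (ℕ × ℕ) pdRel :=
  ⟨fun a b hab hba => by
    unfold pdRel at hab hba
    exact Prod.ext_iff.mpr ⟨by omega, by omega⟩⟩

instance : IsTotal (ℕ × ℕ) pdRel :=
  ⟨fun a b => by unfold pdRel; omega⟩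

/-- The pipe dream reading word of a finite set `D` of boxes: the letters `i + j - 1`
over `(i, j) ∈ D`, in the order making `(i, -j)` increase lexicographically. -/
def pdWord (D : Finset (ℕ × ℕ)) : List ℕ :=
  (D.sort pdRel).map fun p => p.1 + p.2 - 1

/-- The product `s_{i_1} s_{i_2} ⋯ s_{i_l}` of simple transpositions. -/
def wordProd (l : List ℕ) : Equiv.Perm ℕ :=
  (l.map fun i => Equiv.swap i (i + 1)).prod

/-- `l` is a reduced word for `w`: a minimal-length word of positive letters whose
product of simple transpositions is `w`. -/
def IsReducedWordOf (w : Equiv.Perm ℕ) (l : List ℕ) : Prop :=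
  (∀ a ∈ l, 1 ≤ a) ∧ wordProd l = w ∧
    ∀ l' : List ℕ, (∀ a ∈ l', 1 ≤ a) → wordProd l' = w → l.length ≤ l'.length

/-- The set `RP(w)` of reduced pipe dreams for `w`. -/
def RP (w : Equiv.Perm ℕ) : Set (Finset (ℕ × ℕ)) :=
  {D | (∀ p ∈ D, 1 ≤ p.1 ∧ 1 ≤ p.2) ∧ IsReducedWordOf w (pdWord D)}

/-- `I^FPF_m`: involutions in `S_∞` that are fixed-point-free on `[m]` and fix
all `i > m`. -/
def IFPFm (m : ℕ) : Set (Equiv.Perm ℕ) :=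
  {y | y 0 = 0 ∧ y * y = 1 ∧ (∀ i, 1 ≤ i → i ≤ m → y i ≠ i) ∧ ∀ i, m < i → y i = i}

/-- `z = FPF_m(y)`: `z` agrees with `y` on `[m]` and swaps `m + 2k - 1, m + 2k`
for all `k ≥ 1`. -/
def IsFPFStdOf (m : ℕ) (y z : Equiv.Perm ℕ) : Prop :=
  (∀ i, i ≤ m → z i = y i) ∧
    ∀ k : ℕ, z (m + 2 * k + 1) = m + 2 * k + 2 ∧ z (m + 2 * k + 2) = m + 2 * k + 1

/-- The set `FP(z)` of fpf-involution pipe dreams for `z ∈ I^FPF_∞`. -/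
def FP (z : Equiv.Perm ℕ) : Set (Finset (ℕ × ℕ)) :=
  {E | ∃ (m : ℕ) (y : Equiv.Perm ℕ) (D : Finset (ℕ × ℕ)), Even m ∧ y ∈ IFPFm m ∧
    IsFPFStdOf m y z ∧ D ∈ RP y ∧ D.image Prod.swap = D ∧
    E = D.filter fun p => p.2 < p.1}

/-- The minor `det(U_{AB})` of the generic `m × n` matrix `U`, with rows `A` and
columns `B` listed in increasing order. -/
noncomputable def genMinor (K : Type*) [CommRing K] {m n : ℕ}
    (A : Finset (Fin m)) (B : Finset (Fin n)) (h : A.card = B.card) :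
    MvPolynomial (Fin m × Fin n) K :=
  (Matrix.of fun s t : Fin A.card =>
    (MvPolynomial.X (A.orderEmbOfFin rfl s, B.orderEmbOfFin h.symm t) :
      MvPolynomial (Fin m × Fin n) K)).det

/-- The antidiagonal monomial `u_{AB} = ∏_{(a,b) ∈ A ⊙ B} u_{ab}`. -/
noncomputable def genMon (K : Type*) [CommRing K] {m n : ℕ}
    (A : Finset (Fin m)) (B : Finset (Fin n)) (h : A.card = B.card) :
    MvPolynomial (Fin m × Fin n) K :=
  ∏ t : Fin A.card, MvPolynomial.X (A.orderEmbOfFin rfl t, B.orderEmbOfFin h.symm t.rev)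

/-- The exponent vector of the antidiagonal monomial `u_{AB}`. -/
noncomputable def antidiagExp {m n : ℕ} (A : Finset (Fin m)) (B : Finset (Fin n))
    (h : A.card = B.card) : (Fin m × Fin n) →₀ ℕ :=
  ∑ t : Fin A.card, Finsupp.single (A.orderEmbOfFin rfl t, B.orderEmbOfFin h.symm t.rev) 1

/-- The ideal `I_w`, generated by the minors `det(U_{AB})` with `A ⊆ [i]`, `B ⊆ [j]`,
`|A| = |B| = r_w(i,j) + 1` for some `(i,j) ∈ [m] × [n]`. -/
noncomputable def IwIdeal (K : Type*) [Field K] (m n : ℕ) (w : Equiv.Perm ℕ) :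
    Ideal (MvPolynomial (Fin m × Fin n) K) :=
  Ideal.span {g : MvPolynomial (Fin m × Fin n) K |
    ∃ (i j : ℕ) (A : Finset (Fin m)) (B : Finset (Fin n)) (h : A.card = B.card),
      1 ≤ i ∧ i ≤ m ∧ 1 ≤ j ∧ j ≤ n ∧ (∀ a ∈ A, (a : ℕ) + 1 ≤ i) ∧
      (∀ b ∈ B, (b : ℕ) + 1 ≤ j) ∧ A.card = rnk w i j + 1 ∧ g = genMinor K A B h}

/-- The monomial ideal `J_w`, generated by the monomials `u_{AB}` with `A ⊆ [i]`,
`B ⊆ [j]`, `|A| = |B| = r_w(i,j) + 1` for some `(i,j) ∈ [m] × [n]`. -/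
noncomputable def JwIdeal (K : Type*) [Field K] (m n : ℕ) (w : Equiv.Perm ℕ) :
    Ideal (MvPolynomial (Fin m × Fin n) K) :=
  Ideal.span {g : MvPolynomial (Fin m × Fin n) K |
    ∃ (i j : ℕ) (A : Finset (Fin m)) (B : Finset (Fin n)) (h : A.card = B.card),
      1 ≤ i ∧ i ≤ m ∧ 1 ≤ j ∧ j ≤ n ∧ (∀ a ∈ A, (a : ℕ) + 1 ≤ i) ∧
      (∀ b ∈ B, (b : ℕ) + 1 ≤ j) ∧ A.card = rnk w i j + 1 ∧ g = genMon K A B h}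

/-- The matrix Schubert variety
`X_w = {A ∈ Mat_{m×n} : rank A_{[i][j]} ≤ r_w(i,j) for all (i,j) ∈ [m] × [n]}`. -/
noncomputable def Xw (K : Type*) [Field K] (m n : ℕ) (w : Equiv.Perm ℕ) :
    Set (Matrix (Fin m) (Fin n) K) :=
  {A | ∀ (i j : ℕ) (hi : i ≤ m) (hj : j ≤ n), 1 ≤ i → 1 ≤ j →
    (A.submatrix (Fin.castLE hi) (Fin.castLE hj)).rank ≤ rnk w i j}

/-- `I(X_w)`: the ideal of polynomials vanishing on `X_w`. -/
noncomputable def IXw (K : Type*) [Field K] (m n : ℕ) (w : Equiv.Perm ℕ) :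
    Ideal (MvPolynomial (Fin m × Fin n) K) :=
  vanishingIdeal (Xw K m n w) fun A v => A v.1 v.2

/-- The variable `u_{pq}` (with `1 ≤ q < p ≤ n`) of `R_n`. -/
def ssvar {n : ℕ} (p q : ℕ) (hp : p ≤ n) (hq : 1 ≤ q) (hqp : q < p) : SSVar n :=
  ⟨(⟨p - 1, by omega⟩, ⟨q - 1, by omega⟩), Fin.mk_lt_mk.mpr (by omega)⟩

/-- Index set for the variables `u_{ij}`, `i > j ≥ 1`, over all positive integers. -/
abbrev PVar : Type := {p : ℕ × ℕ // 1 ≤ p.2 ∧ p.2 < p.1}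

/-- The generic skew-symmetric array `U^ss` over the positive integers:
`u_{xy}` if `x > y`, `-u_{yx}` if `x < y`, `0` if `x = y`. -/
noncomputable def UssP (K : Type*) [CommRing K] (x y : ℕ) : MvPolynomial PVar K :=
  if h : 1 ≤ y ∧ y < x then MvPolynomial.X ⟨(x, y), h⟩
  else if h' : 1 ≤ x ∧ x < y then -MvPolynomial.X ⟨(y, x), h'⟩
  else 0

/-- `pf(U^ss_{RR})` for a finite set `R` of positive integers. -/
noncomputable def pfUssP (K : Type*) [CommRing K] (R : Finset ℕ) : MvPolynomial PVar K :=
  Pfaffian (Matrix.of fun s t : Fin R.card =>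
    UssP K (R.orderEmbOfFin rfl s) (R.orderEmbOfFin rfl t))

/-- `g_{AB}`: the Pfaffian of the `(|B|+|A|) × (|B|+|A|)` skew-symmetric matrix whose
rows and columns are labeled by `B` (increasing) followed by `A` (increasing), with
entry `U^ss_{xy}` at a position labeled `(x, y)`, except that the entry is `0` when
both labels come from the `A`-block. -/
noncomputable def gAB (K : Type*) [CommRing K] (A B : Finset ℕ) : MvPolynomial PVar K :=
  Pfaffian ((Matrix.of fun p q : Fin B.card ⊕ Fin A.card =>
      match p, q with
      | Sum.inl s, Sum.inl t => UssP K (B.orderEmbOfFin rfl s) (B.orderEmbOfFin rfl t)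
      | Sum.inl s, Sum.inr t => UssP K (B.orderEmbOfFin rfl s) (A.orderEmbOfFin rfl t)
      | Sum.inr s, Sum.inl t => UssP K (A.orderEmbOfFin rfl s) (B.orderEmbOfFin rfl t)
      | Sum.inr _, Sum.inr _ => (0 : MvPolynomial PVar K)).submatrix
    finSumFinEquiv.symm finSumFinEquiv.symm)

/-- The exponent of the sign `⟨T, S⟩ = (-1)^{|S||T| + C(|S|,2) + ∑ of the (1-indexed)
positions in the increasing enumeration of `T` occupied by elements of `S`}`. -/
def setSgnExp (T S : Finset ℕ) : ℕ :=
  S.card * T.card + Nat.choose S.card 2 +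
    ∑ t : Fin T.card, if T.orderEmbOfFin rfl t ∈ S then (t : ℕ) + 1 else 0

/-!
For an involution `z` with `z p = q < p`, counting inversions shows that the elements of `Ψ(z,p)`
are the conjugates `(p,r) z (p,r)` for which `r` is a Bruhat cover of `p` in `z` and not
`p < z r < r`. Each of them lowers the rank table of `z`, to `0` at the corner `(p,q)`; this gives
(2) and one inclusion of (3).

A monomial lies in `J^ss_z` if and only if, for some `(i,j)`, the boxes of its variables and their
transposes contain an antidiagonal chain of more than `r_z(i,j)` elements inside `[i] × [j]`.
Suppose that a monomial lies in every `J^ss_v` but not in `J^ss_z`. Then for each `v` there is a box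
`(i,j)` at which the longest chain has exactly `r_z(i,j)` elements. The length of the longest chain
is supermodular in `(i,j)`, while `r_z` is modular on rectangles without dots, so two such tight
boxes can be uncrossed. An extremal tight box satisfies `r_z(i,j) ≥ (i - p) + (j - q) + 1`, whereas
a chain avoiding `[p] × [q]` has at most `(i - p) + (j - q)` elements. Hence the chain meets
`[p] × [q]`, and it can do so only at the corner: `u_{pq}` divides the monomial.
-/

open Finset Equiv

section Inversions

lemma sum_eq_add_add_sum_erase_erase {α β : Type*} [DecidableEq α] [AddCommMonoid β]
    {s : Finset α} {p r : α} (hp : p ∈ s) (hr : r ∈ s) (hpr : p ≠ r) (f : α → β) :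
    ∑ a ∈ s, f a = f p + f r + ∑ a ∈ (s.erase p).erase r, f a := by
  rw [add_assoc, add_sum_erase _ f (mem_erase.2 ⟨hpr.symm, hr⟩), add_sum_erase _ f hp]

lemma sum_sum_eq_add_sum_erase_erase {α : Type*} [DecidableEq α] {s : Finset α} {p r : α}
    (hp : p ∈ s) (hr : r ∈ s) (hpr : p ≠ r) (g : α → α → ℕ) :
    ∑ a ∈ s, ∑ b ∈ s, g a b =
      (g p p + g p r + g r p + g r r) +
        ∑ b ∈ (s.erase p).erase r, (g p b + g r b + g b p + g b r) +
        ∑ a ∈ (s.erase p).erase r, ∑ b ∈ (s.erase p).erase r, g a b := by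
  simp only [sum_eq_add_add_sum_erase_erase hp hr hpr, sum_add_distrib]
  ring

lemma sum_comp_perm {α β : Type*} [AddCommMonoid β] {s : Finset α} {w : Perm α}
    (hw : ∀ a, w a ∈ s ↔ a ∈ s) (f : α → β) : ∑ a ∈ s, f (w a) = ∑ a ∈ s, f a :=
  sum_equiv w (fun a => (hw a).symm) fun _ _ => rfl

variable {α : Type*} [LinearOrder α]

/-- The number of inversions of the permutation `w` both of whose positions lie in `s`. -/
def invCount (s : Finset α) (w : Perm α) : ℕ :=
  ∑ a ∈ s, ∑ b ∈ s, if a < b ∧ w b < w a then 1 else 0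

lemma invCount_inv {s : Finset α} {w : Perm α} (hw : ∀ a, w a ∈ s ↔ a ∈ s) :
    invCount s w⁻¹ = invCount s w := by
  unfold invCount
  rw [← sum_comp_perm hw, sum_comm, ← sum_comp_perm hw]
  simp [and_comm]

lemma inversion_indicators_add {β : Type*} [LinearOrder β] {p r b : α} {x y c : β} (hpr : p < r)
    (hxy : x < y) (hbp : b ≠ p) (hbr : b ≠ r) (hcx : c ≠ x) (hcy : c ≠ y) :
    ((if p < b ∧ c < y then 1 else 0) + (if r < b ∧ c < x then 1 else 0) +
        (if b < p ∧ y < c then 1 else 0) + if b < r ∧ x < c then 1 else 0) =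
      ((if p < b ∧ c < x then 1 else 0) + (if r < b ∧ c < y then 1 else 0) +
        (if b < p ∧ x < c then 1 else 0) + if b < r ∧ y < c then 1 else 0) +
      2 * if p < b ∧ b < r ∧ x < c ∧ c < y then 1 else 0 := by
  grind (splits := 20)

lemma invCount_mul_swap {s : Finset α} {p r : α} (hp : p ∈ s) (hr : r ∈ s) (hpr : p < r)
    {w : Perm α} (hw : w p < w r) :
    invCount s (w * swap p r) =
      invCount s w + 1 + 2 * #{e ∈ s | p < e ∧ e < r ∧ w p < w e ∧ w e < w r} := by
  have apply_off : ∀ a ∈ (s.erase p).erase r, (w * swap p r) a = w a := by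
    simp +contextual [swap_apply_of_ne_of_ne]
  have inside : #{e ∈ s | p < e ∧ e < r ∧ w p < w e ∧ w e < w r} =
      ∑ e ∈ (s.erase p).erase r, if p < e ∧ e < r ∧ w p < w e ∧ w e < w r then 1 else 0 := by
    rw [card_filter, sum_eq_add_add_sum_erase_erase hp hr hpr.ne]
    simp
  have rest : ∑ a ∈ (s.erase p).erase r, ∑ b ∈ (s.erase p).erase r,
        (if a < b ∧ (w * swap p r) b < (w * swap p r) a then 1 else 0) =
      ∑ a ∈ (s.erase p).erase r, ∑ b ∈ (s.erase p).erase r,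
        if a < b ∧ w b < w a then 1 else 0 :=
    sum_congr rfl fun a ha => sum_congr rfl fun b hb => by rw [apply_off a ha, apply_off b hb]
  simp only [invCount, sum_sum_eq_add_sum_erase_erase hp hr hpr.ne, inside, mul_sum, rest]
  rw [sum_congr rfl fun b hb => by
    obtain ⟨hbr, hbp, -⟩ : b ≠ r ∧ b ≠ p ∧ b ∈ s := by simpa only [mem_erase] using hb
    rw [apply_off b hb, Perm.mul_apply, Perm.mul_apply, swap_apply_left, swap_apply_right,
      inversion_indicators_add hpr hw hbp hbr (w.injective.ne hbp) (w.injective.ne hbr)],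
    sum_add_distrib]
  simp only [Perm.mul_apply, swap_apply_left, swap_apply_right, hpr, hw, hpr.not_gt, hw.not_gt,
    lt_irrefl, false_and, and_self, and_false, if_true, if_false]
  ring

end Inversions

section FixedPointFree

variable {z : Perm ℕ} {M : ℕ}

lemma apply_pos_iff {w : Perm ℕ} (hw : w 0 = 0) {i : ℕ} : 0 < w i ↔ 0 < i := by
  rw [pos_iff_ne_zero, pos_iff_ne_zero, not_iff_not, ← hw, w.injective.eq_iff, hw]

/-- `z` is a fixed-point-free involution of the positive integers. The extra point `0`, present
because permutations of the positive integers are modelled on `ℕ`, is fixed. -/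
structure IsFPFInvolution (z : Perm ℕ) : Prop where
  apply_zero : z 0 = 0
  apply_ne : ∀ {i}, 0 < i → z i ≠ i
  apply_apply : ∀ i, z (z i) = i

lemma IsFPFInvolution.inv_eq (hz : IsFPFInvolution z) : z⁻¹ = z :=
  inv_eq_of_mul_eq_one_left (Equiv.ext hz.apply_apply)

lemma IsFPFInvolution.apply_eq_iff (hz : IsFPFInvolution z) {i j : ℕ} : z i = j ↔ i = z j :=
  ⟨fun h => by rw [← h, hz.apply_apply], fun h => by rw [h, hz.apply_apply]⟩

/-- The involution `z ∈ I^FPF_∞` agrees with `1_FPF` from `M` on. The cut-off is odd, so that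
`{0, …, M - 1}` is stable under `1_FPF`. -/
structure StandardFrom (M : ℕ) (z : Perm ℕ) : Prop extends IsFPFInvolution z where
  odd : Odd M
  tail : ∀ i, M ≤ i → z i = oneFPF i

lemma isFPFInvolution_of_mem_IFPFInfty (hz : z ∈ IFPFInfty) : IsFPFInvolution z :=
  ⟨hz.1, fun {i} hi => hz.2.1 i hi, DFunLike.congr_fun hz.2.2.1⟩

lemma exists_standardFrom (hz : z ∈ IFPFInfty) (k : ℕ) : ∃ M, k < M ∧ StandardFrom M z := by
  obtain ⟨N, hN⟩ := hz.2.2.2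
  exact ⟨2 * (N + k) + 1, by omega, isFPFInvolution_of_mem_IFPFInfty hz,
    odd_two_mul_add_one _, fun i hi => hN i (by omega)⟩

lemma StandardFrom.mem_IFPFInfty (hz : StandardFrom M z) : z ∈ IFPFInfty :=
  ⟨hz.apply_zero, fun _ hi => hz.apply_ne hi, Equiv.ext hz.apply_apply, M, hz.tail⟩

lemma le_oneFPF (hM : Odd M) {i : ℕ} (hi : M ≤ i) : M ≤ oneFPF i := by
  obtain ⟨k, rfl⟩ := hM
  unfold oneFPF
  split_ifs <;> omega

lemma StandardFrom.apply_lt_iff (hz : StandardFrom M z) (a : ℕ) : z a < M ↔ a < M := by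
  have le_apply : ∀ i, M ≤ i → M ≤ z i := fun i hi => hz.tail i hi ▸ le_oneFPF hz.odd hi
  rw [← not_le, ← not_le]
  exact not_congr ⟨fun h => hz.apply_apply a ▸ le_apply _ h, le_apply a⟩

lemma StandardFrom.apply_mem_range_iff (hz : StandardFrom M z) (a : ℕ) :
    z a ∈ range M ↔ a ∈ range M := by
  simpa only [mem_range] using hz.apply_lt_iff a

lemma StandardFrom.coe_filter_eq_Dss (hz : StandardFrom M z) :
    (({x ∈ range M ×ˢ range M | x.2 < x.1 ∧ x.1 < z x.2 ∧ x.2 < z x.1} : Finset (ℕ × ℕ)) :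
      Set (ℕ × ℕ)) = Dss z := by
  ext ⟨i, j⟩
  simp only [coe_filter, mem_product, mem_range, Set.mem_ofPred_eq, Dss]
  constructor
  · rintro ⟨-, hji, hij, hji'⟩
    have hj : j ≠ 0 := by
      rintro rfl
      exact absurd hij (by simp [hz.apply_zero])
    exact ⟨Nat.pos_of_ne_zero hj, hji', hji, hij⟩
  · rintro ⟨-, hji', hji, hij⟩
    have hj : j < M := by
      by_contra! hj
      rw [hz.tail j hj, oneFPF] at hij
      split_ifs at hij <;> omega
    have hzj := (hz.apply_lt_iff j).2 hj
    exact ⟨⟨by omega, hj⟩, hji, hij, hji'⟩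

lemma StandardFrom.ellFpf_eq_sum (hz : StandardFrom M z) :
    ellFpf z = ∑ i ∈ range M, ∑ j ∈ range M, if j < i ∧ i < z j ∧ j < z i then 1 else 0 := by
  rw [ellFpf, ← hz.coe_filter_eq_Dss, Set.ncard_coe_finset, card_filter, sum_product]

lemma StandardFrom.invCount_eq_sum (hz : StandardFrom M z) :
    invCount (range M) z =
      ∑ i ∈ range M, ∑ j ∈ range M, if i < z j ∧ j < z i then 1 else 0 := by
  refine sum_congr rfl fun i _ => ?_
  rw [← sum_comp_perm hz.apply_mem_range_iff]
  simp only [hz.apply_apply]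

lemma StandardFrom.two_mul_card_excedances (hz : StandardFrom M z) :
    2 * #{i ∈ range M | i < z i} + 1 = M := by
  have excedances_eq : #{i ∈ range M | z i < i} = #{i ∈ range M | i < z i} := by
    rw [card_filter, card_filter, ← sum_comp_perm hz.apply_mem_range_iff]
    simp only [hz.apply_apply]
  have fixed_eq : {i ∈ range M | z i = i} = ({0} : Finset ℕ) := by
    ext i
    rcases Nat.eq_zero_or_pos i with rfl | hi
    · simp [hz.apply_zero, hz.odd.pos]
    · simp [hz.apply_ne hi, hi.ne']
  have trichotomy : #{i ∈ range M | i < z i} + #{i ∈ range M | z i < i} +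
      #{i ∈ range M | z i = i} = M := by
    conv_rhs => rw [← card_range M, card_eq_sum_ones]
    simp only [card_filter, ← sum_add_distrib]
    exact sum_congr rfl fun i _ => by split_ifs <;> omega
  rw [excedances_eq, fixed_eq, card_singleton] at trichotomy
  omega

lemma sum_sum_eq_two_mul_add_sum_diag {s : Finset ℕ} {P : ℕ → ℕ → Prop} [DecidableRel P]
    (hP : ∀ i j, P i j ↔ P j i) :
    (∑ i ∈ s, ∑ j ∈ s, if P i j then 1 else 0) =
      2 * (∑ i ∈ s, ∑ j ∈ s, if j < i ∧ P i j then 1 else 0) + #{i ∈ s | P i i} := by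
  have lower_eq_upper : (∑ i ∈ s, ∑ j ∈ s, if j < i ∧ P i j then 1 else 0) =
      ∑ i ∈ s, ∑ j ∈ s, if i < j ∧ P i j then 1 else 0 := by
    rw [sum_comm]
    simp only [hP]
  have diag : #{i ∈ s | P i i} = ∑ i ∈ s, ∑ j ∈ s, if i = j ∧ P i j then 1 else 0 := by
    rw [card_filter]
    refine sum_congr rfl fun i hi => ?_
    simp [ite_and, hi]
  rw [two_mul, diag]
  nth_rw 2 [lower_eq_upper]
  simp only [← sum_add_distrib]
  refine sum_congr rfl fun i _ => sum_congr rfl fun j _ => ?_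
  rcases lt_trichotomy i j with hij | rfl | hji
  · simp [hij, hij.ne, hij.not_gt]
  · simp
  · simp [hji, hji.ne', hji.not_gt]

lemma StandardFrom.two_mul_invCount (hz : StandardFrom M z) :
    2 * invCount (range M) z + 1 = 4 * ellFpf z + M := by
  have split := sum_sum_eq_two_mul_add_sum_diag (s := range M) (P := fun i j => i < z j ∧ j < z i)
    fun _ _ => and_comm
  simp only [and_self] at split
  rw [hz.invCount_eq_sum, split, ← hz.ellFpf_eq_sum]
  linarith [hz.two_mul_card_excedances]

end FixedPointFree

section ConjSwap

variable {z : Perm ℕ} {p r M : ℕ}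

/-- The conjugate `(p,r) z (p,r)` of `z` by a transposition. -/
def conjSwap (z : Perm ℕ) (p r : ℕ) : Perm ℕ := swap p r * z * swap p r

lemma conjSwap_conjSwap (z : Perm ℕ) (p r : ℕ) : conjSwap (conjSwap z p r) p r = z := by
  ext
  simp [conjSwap]

lemma isFPFInvolution_conjSwap (hz : IsFPFInvolution z) (hp : 0 < p) (hr : 0 < r) :
    IsFPFInvolution (conjSwap z p r) where
  apply_zero := by
    simp [conjSwap, swap_apply_of_ne_of_ne hp.ne hr.ne, hz.apply_zero]
  apply_ne {i} hi h := by
    have swap_pos : 0 < swap p r i := by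
      rw [swap_apply_def]
      split_ifs <;> assumption
    exact hz.apply_ne swap_pos ((swap p r).injective (by simpa [conjSwap] using h))
  apply_apply i := by simp [conjSwap, hz.apply_apply]

lemma standardFrom_conjSwap (hz : StandardFrom M z) (hp : 0 < p) (hr : 0 < r) (hpM : p < M)
    (hrM : r < M) : StandardFrom M (conjSwap z p r) where
  toIsFPFInvolution := isFPFInvolution_conjSwap hz.toIsFPFInvolution hp hr
  odd := hz.odd
  tail i hi := by
    have hzi : M ≤ z i := not_lt.1 fun h => hi.not_gt ((hz.apply_lt_iff i).1 h)
    rw [conjSwap, Perm.mul_apply, Perm.mul_apply,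
      swap_apply_of_ne_of_ne (hpM.trans_le hi).ne' (hrM.trans_le hi).ne',
      swap_apply_of_ne_of_ne (hpM.trans_le hzi).ne' (hrM.trans_le hzi).ne', hz.tail i hi]

lemma conjSwap_mem_IFPFInfty (hz : z ∈ IFPFInfty) (hp : 0 < p) (hr : 0 < r) :
    conjSwap z p r ∈ IFPFInfty := by
  obtain ⟨M, hM, hzM⟩ := exists_standardFrom hz (p + r)
  exact (standardFrom_conjSwap hzM hp hr (by omega) (by omega)).mem_IFPFInfty

lemma IsFPFInvolution.conjSwap_eq (hz : IsFPFInvolution z) (p r : ℕ) :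
    conjSwap z p r = (z * swap p r)⁻¹ * swap p r := by
  simp [conjSwap, hz.inv_eq]

lemma IsFPFInvolution.apply_right_ne_left (hz : IsFPFInvolution z) (hp : z p < p) (hpr : p < r) :
    z r ≠ p := fun h => by
  have := hz.apply_eq_iff.1 h
  omega

lemma IsFPFInvolution.swap_apply_apply_right (hz : IsFPFInvolution z) (hp : z p < p)
    (hpr : p < r) : swap p r (z r) = z r :=
  swap_apply_of_ne_of_ne (hz.apply_right_ne_left hp hpr) (hz.apply_ne (by omega))

lemma swap_apply_apply_left (hp : z p < p) (hpr : p < r) : swap p r (z p) = z p :=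
  swap_apply_of_ne_of_ne hp.ne (hp.trans hpr).ne

lemma IsFPFInvolution.conjSwap_apply_left (hz : IsFPFInvolution z) (hp : z p < p) (hpr : p < r) :
    conjSwap z p r p = z r := by
  simp [conjSwap, hz.swap_apply_apply_right hp hpr]

lemma conjSwap_apply_right (hp : z p < p) (hpr : p < r) : conjSwap z p r r = z p := by
  simp [conjSwap, swap_apply_apply_left hp hpr]

lemma IsFPFInvolution.conjSwap_apply_apply_left (hz : IsFPFInvolution z) (hp : z p < p)
    (hpr : p < r) : conjSwap z p r (z p) = r :=
  (isFPFInvolution_conjSwap hz (by omega) (by omega)).apply_eq_iff.2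
    (conjSwap_apply_right hp hpr).symm

lemma IsFPFInvolution.conjSwap_apply_apply_right (hz : IsFPFInvolution z) (hp : z p < p)
    (hpr : p < r) : conjSwap z p r (z r) = p :=
  (isFPFInvolution_conjSwap hz (by omega) (by omega)).apply_eq_iff.2
    (hz.conjSwap_apply_left hp hpr).symm

lemma IsFPFInvolution.conjSwap_apply_of_ne (hz : IsFPFInvolution z) {a : ℕ} (hap : a ≠ p)
    (har : a ≠ r) (hazp : a ≠ z p) (hazr : a ≠ z r) : conjSwap z p r a = z a := by
  rw [conjSwap, Perm.mul_apply, Perm.mul_apply, swap_apply_of_ne_of_ne hap har,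
    swap_apply_of_ne_of_ne (mt hz.apply_eq_iff.1 hazp) (mt hz.apply_eq_iff.1 hazr)]

lemma IsFPFInvolution.card_filter_swap_apply (hz : IsFPFInvolution z) (hp : z p < p)
    (hrM : r < M) :
    #{e ∈ range M | p < e ∧ e < r ∧ z p < swap p r (z e) ∧ swap p r (z e) < z r} =
      #{e ∈ range M | p < e ∧ e < r ∧ z p < z e ∧ z e < z r} +
        if p < z r ∧ z r < r then 1 else 0 := by
  have swap_apply : ∀ e, p < e → e ≠ z r → swap p r (z e) = z e := fun e he hne =>
    swap_apply_of_ne_of_ne (fun h => by have := hz.apply_eq_iff.1 h; omega)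
      fun h => hne (hz.apply_eq_iff.1 h)
  have swap_apply_zr : swap p r (z (z r)) = p := by rw [hz.apply_apply, swap_apply_right]
  split_ifs with hzr
  · rw [← card_insert_of_notMem (a := z r)]
    · congr 1
      ext e
      rcases eq_or_ne e (z r) with rfl | hne
      · simp only [swap_apply_zr, mem_filter, mem_range, mem_insert, true_or, iff_true]
        omega
      · simp +contextual [hne, swap_apply e]
    · simp only [mem_filter, hz.apply_apply]
      omega
  · rw [add_zero]
    congr 1
    refine filter_congr fun e _ => ?_
    rcases eq_or_ne e (z r) with rfl | hne
    · tauto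
    · simp +contextual [swap_apply e, hne]

lemma StandardFrom.invCount_conjSwap (hz : StandardFrom M z) (hp : z p < p) (hpr : p < r)
    (hrM : r < M) (hzr : z p < z r) :
    invCount (range M) (conjSwap z p r) = invCount (range M) z + 2 +
      4 * #{e ∈ range M | p < e ∧ e < r ∧ z p < z e ∧ z e < z r} +
        2 * if p < z r ∧ z r < r then 1 else 0 := by
  have hpM : p ∈ range M := mem_range.2 (hpr.trans hrM)
  have inv_eq : (z * swap p r)⁻¹ = swap p r * z := by simp [hz.inv_eq]
  have stable : ∀ a, (z * swap p r) a ∈ range M ↔ a ∈ range M := fun a => by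
    rw [Perm.mul_apply, hz.apply_mem_range_iff, swap_apply_def]
    grind
  have inv_lt : (z * swap p r)⁻¹ p < (z * swap p r)⁻¹ r := by
    simpa [inv_eq, swap_apply_apply_left hp hpr,
      hz.toIsFPFInvolution.swap_apply_apply_right hp hpr] using hzr
  have first := invCount_mul_swap hpM (mem_range.2 hrM) hpr hzr
  have second := invCount_mul_swap hpM (mem_range.2 hrM) hpr inv_lt
  rw [← hz.toIsFPFInvolution.conjSwap_eq, invCount_inv stable, inv_eq] at second
  simp only [Perm.mul_apply, swap_apply_apply_left hp hpr,
    hz.toIsFPFInvolution.swap_apply_apply_right hp hpr,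
    hz.toIsFPFInvolution.card_filter_swap_apply hp hrM] at second
  omega

/-- In Bruhat order, `w` is covered by `w (p,r)`: no point of the graph of `w` lies strictly
between `(p, w p)` and `(r, w r)`. -/
def IsBruhatCover (w : Perm ℕ) (p r : ℕ) : Prop :=
  p < r ∧ w p < w r ∧ ∀ e, p < e → e < r → ¬(w p < w e ∧ w e < w r)

lemma ellFpf_conjSwap_of_lt (hz : z ∈ IFPFInfty) (hp : z p < p) (hpr : p < r) (hzr : z p < z r) :
    ellFpf z < ellFpf (conjSwap z p r) ∧
      (ellFpf (conjSwap z p r) = ellFpf z + 1 ↔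
        IsBruhatCover z p r ∧ ¬(p < z r ∧ z r < r)) := by
  obtain ⟨M, hrM, hzM⟩ := exists_standardFrom hz r
  have count := hzM.invCount_conjSwap hp hpr hrM hzr
  have hell := hzM.two_mul_invCount
  have hell' := (standardFrom_conjSwap hzM (by omega) (by omega) (hpr.trans hrM)
    hrM).two_mul_invCount
  have inside_eq_zero : #{e ∈ range M | p < e ∧ e < r ∧ z p < z e ∧ z e < z r} = 0 ↔
      IsBruhatCover z p r := by
    rw [card_eq_zero, filter_eq_empty_iff, IsBruhatCover]
    simp only [hpr, hzr, true_and, mem_range]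
    exact ⟨fun h e h1 h2 h3 => h (by omega) ⟨h1, h2, h3⟩, fun h e _ he => h e he.1 he.2.1 he.2.2⟩
  rw [← inside_eq_zero]
  split_ifs at count <;> omega

lemma ellFpf_conjSwap_eq_add_one_iff (hz : z ∈ IFPFInfty) (hp : z p < p) (hpr : p < r) :
    ellFpf (conjSwap z p r) = ellFpf z + 1 ↔ IsBruhatCover z p r ∧ ¬(p < z r ∧ z r < r) := by
  have hz' := isFPFInvolution_of_mem_IFPFInfty hz
  rcases lt_or_ge (z p) (z r) with hzr | hzr
  · exact (ellFpf_conjSwap_of_lt hz hp hpr hzr).2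
  · have zr_lt : z r < z p := hzr.lt_of_ne (z.injective.ne hpr.ne')
    have decreasing : ellFpf (conjSwap z p r) < ellFpf z := by
      have := (ellFpf_conjSwap_of_lt (z := conjSwap z p r) (p := p) (r := r)
        (conjSwap_mem_IFPFInfty hz (by omega) (by omega))
        (by rw [hz'.conjSwap_apply_left hp hpr]; omega) hpr
        (by rwa [hz'.conjSwap_apply_left hp hpr, conjSwap_apply_right hp hpr])).1
      rwa [conjSwap_conjSwap] at this
    exact iff_of_false (by omega) fun h => by have := h.1.2.1; omega

lemma mem_PsiSet_iff (hz : z ∈ IFPFInfty) (hp : z p < p) {v : Perm ℕ} :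
    v ∈ PsiSet z p ↔
      ∃ r, IsBruhatCover z p r ∧ ¬(p < z r ∧ z r < r) ∧ v = conjSwap z p r := by
  constructor
  · rintro ⟨r, hpr, rfl, hell⟩
    obtain ⟨hcover, hzr⟩ := (ellFpf_conjSwap_eq_add_one_iff hz hp hpr).1 hell
    exact ⟨r, hcover, hzr, rfl⟩
  · rintro ⟨r, hcover, hzr, rfl⟩
    exact ⟨r, hcover.1, rfl, (ellFpf_conjSwap_eq_add_one_iff hz hp hcover.1).2 ⟨hcover, hzr⟩⟩

end ConjSwap

section Support

variable {z : Perm ℕ} {n p r i j : ℕ}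

lemma apply_le_of_mem_FPFIn (hz : z ∈ FPFIn n) (hi : n < i) (hj : 0 < j) (hji : j < i)
    (hjz : j < z i) : z j ≤ i := by
  by_contra! hij
  exact hi.not_ge (hz.2 (show (i, j) ∈ Dss z from ⟨hj, hjz, hji, hij⟩)).1.2

lemma conjSwap_apply_le (hz : IsFPFInvolution z) (hp : z p < p) (hpr : p < r) (hzr : z p < z r)
    (hi : p < i) : conjSwap z p r i ≤ z i := by
  rcases eq_or_ne i r with rfl | hir
  · exact (conjSwap_apply_right hp hpr).trans_le hzr.le
  rcases eq_or_ne i (z r) with rfl | hizr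
  · rw [hz.conjSwap_apply_apply_right hp hpr, hz.apply_apply]
    exact hpr.le
  · exact (hz.conjSwap_apply_of_ne hi.ne' hir (hp.trans hi).ne' hizr).le

lemma right_le_of_lt_conjSwap_apply (hz : z ∈ FPFIn n) (hp : z p < p) (hpn : p ≤ n)
    (hcover : IsBruhatCover z p r) (hzr : ¬(p < z r ∧ z r < r)) (hi : n < i)
    (h : z p < conjSwap z p r i) : r ≤ i := by
  obtain ⟨hpr, hlt, hgap⟩ := hcover
  have hz' := isFPFInvolution_of_mem_IFPFInfty hz.1
  by_contra! hir
  have hizr : i ≠ z r := by omega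
  have zp_lt : z p < z i := h.trans_le (conjSwap_apply_le hz' hp hpr hlt (hpn.trans_lt hi))
  have zr_lt : z r < z i :=
    (not_lt.1 fun h' => hgap i (by omega) hir ⟨zp_lt, h'⟩).lt_of_ne (z.injective.ne hir.ne')
  rcases hizr.lt_or_gt with hlt_zr | hzr_lt
  · have := apply_le_of_mem_FPFIn hz (hi.trans hir) (by omega) hir hlt_zr
    omega
  · have := apply_le_of_mem_FPFIn hz hi (by omega) hzr_lt zr_lt
    rw [hz'.apply_apply] at this
    omega

lemma apply_right_le_of_lt_conjSwap_apply (hz : z ∈ FPFIn n) (hp : z p < p) (hpn : p ≤ n)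
    (hcover : IsBruhatCover z p r) (hzr : ¬(p < z r ∧ z r < r)) (hi : n < i)
    (h : p < conjSwap z p r i) : z r ≤ i := by
  obtain ⟨hpr, hlt, hgap⟩ := hcover
  have hz' := isFPFInvolution_of_mem_IFPFInfty hz.1
  have hzrr : z r ≠ r := hz'.apply_ne (by omega)
  by_contra! hizr
  have hir : i ≠ r := by
    rintro rfl
    rw [conjSwap_apply_right hp hpr] at h
    omega
  have p_lt : p < z i := h.trans_le (conjSwap_apply_le hz' hp hpr hlt (hpn.trans_lt hi))
  rcases hir.lt_or_gt with hlt_r | hr_lt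
  · have := hgap i (by omega) hlt_r
    have := apply_le_of_mem_FPFIn hz (hi.trans hlt_r) (by omega) hlt_r hizr
    omega
  · have hzir : z i ≠ r := fun h' => hizr.ne (hz'.apply_eq_iff.1 h')
    have zi_le : z i ≤ r := by
      by_contra! hr
      exact hizr.not_ge (apply_le_of_mem_FPFIn hz hi (by omega) hr_lt hr)
    exact hgap (z i) p_lt (zi_le.lt_of_ne hzir) (by rw [hz'.apply_apply]; omega)

lemma conjSwap_mem_FPFIn (hz : z ∈ FPFIn n) (hp : z p < p) (hpn : p ≤ n)
    (hcover : IsBruhatCover z p r) (hzr : ¬(p < z r ∧ z r < r)) : conjSwap z p r ∈ FPFIn n := by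
  have hz' := isFPFInvolution_of_mem_IFPFInfty hz.1
  obtain ⟨hpr, hlt, -⟩ := id hcover
  refine ⟨conjSwap_mem_IFPFInfty hz.1 (by omega) (by omega), ?_⟩
  rintro ⟨i, j⟩ ⟨hj, hji', hji, hij⟩
  dsimp only at hj hji' hji hij
  suffices hi : i ≤ n by exact ⟨⟨by dsimp only; omega, hi⟩, hj, by dsimp only; omega⟩
  by_contra! hi
  have hjz : j < z i := hji'.trans_le (conjSwap_apply_le hz' hp hpr hlt (hpn.trans_lt hi))
  have hzj : z j ≤ i := apply_le_of_mem_FPFIn hz hi hj hji hjz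
  rcases eq_or_ne j p with rfl | hjp
  · rw [hz'.conjSwap_apply_left hp hpr] at hij
    exact hij.not_ge (apply_right_le_of_lt_conjSwap_apply hz hp hpn hcover hzr hi hji')
  rcases eq_or_ne j (z p) with rfl | hjzp
  · rw [hz'.conjSwap_apply_apply_left hp hpr] at hij
    exact hij.not_ge (right_le_of_lt_conjSwap_apply hz hp hpn hcover hzr hi hji')
  rcases eq_or_ne j r with rfl | hjr
  · rw [conjSwap_apply_right hp hpr] at hij
    omega
  rcases eq_or_ne j (z r) with rfl | hjzr
  · rw [hz'.conjSwap_apply_apply_right hp hpr] at hij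
    omega
  · rw [hz'.conjSwap_apply_of_ne hjp hjr hjzp hjzr] at hij
    omega

theorem PsiSet_subset_FPFIn (hz : z ∈ FPFIn n) (hp : z p < p) (hpn : p ≤ n) :
    PsiSet z p ⊆ FPFIn n := by
  intro v hv
  obtain ⟨r, hcover, hzr, rfl⟩ := (mem_PsiSet_iff hz.1 hp).1 hv
  exact conjSwap_mem_FPFIn hz hp hpn hcover hzr

end Support

section Rank

variable {z : Perm ℕ} {p r i i' j j' : ℕ}

lemma rnk_inv (w : Perm ℕ) (i j : ℕ) : rnk w⁻¹ j i = rnk w i j := by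
  refine card_nbij' (w⁻¹ ·) (w ·) (fun a ha => ?_) (fun a ha => ?_)
    (fun a _ => w.apply_symm_apply a) fun a _ => w.symm_apply_apply a
  · simpa [and_comm] using ha
  · simpa [and_comm] using ha

lemma IsFPFInvolution.rnk_comm (hz : IsFPFInvolution z) (i j : ℕ) : rnk z i j = rnk z j i := by
  rw [← rnk_inv, hz.inv_eq]

lemma rnk_eq_sum_range (w : Perm ℕ) {M : ℕ} (hM : i < M) (j : ℕ) :
    rnk w i j = ∑ a ∈ range M, if (1 ≤ a ∧ a ≤ i) ∧ 1 ≤ w a ∧ w a ≤ j then 1 else 0 := by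
  rw [rnk, ← card_filter]
  congr 1
  ext a
  simp only [mem_filter, mem_Icc, mem_range]
  omega

lemma rnk_mul_swap {w : Perm ℕ} (hp : 1 ≤ p) (hpr : p < r) (hwp : 1 ≤ w p) (hw : w p < w r)
    (i j : ℕ) :
    rnk (w * swap p r) i j + (if (p ≤ i ∧ i < r) ∧ w p ≤ j ∧ j < w r then 1 else 0) =
      rnk w i j := by
  have apply_off : ∀ a ∈ ((range (i + r + 1)).erase p).erase r, (w * swap p r) a = w a := by
    simp +contextual [swap_apply_of_ne_of_ne]
  have hpM : p ∈ range (i + r + 1) := mem_range.2 (by omega)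
  have hrM : r ∈ range (i + r + 1) := mem_range.2 (by omega)
  rw [rnk_eq_sum_range _ (show i < i + r + 1 by omega),
    rnk_eq_sum_range _ (show i < i + r + 1 by omega),
    sum_eq_add_add_sum_erase_erase hpM hrM hpr.ne,
    sum_eq_add_add_sum_erase_erase hpM hrM hpr.ne,
    sum_congr rfl fun a ha => by rw [apply_off a ha]]
  simp only [Perm.mul_apply, swap_apply_left, swap_apply_right]
  split_ifs <;> omega

lemma IsFPFInvolution.rnk_conjSwap (hz : IsFPFInvolution z) (hp : z p < p) (hpr : p < r)
    (hzr : z p < z r) (i j : ℕ) :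
    rnk (conjSwap z p r) i j + (if (p ≤ i ∧ i < r) ∧ z p ≤ j ∧ j < z r then 1 else 0) +
      (if (p ≤ j ∧ j < r) ∧ z p ≤ i ∧ i < z r then 1 else 0) = rnk z i j := by
  have hp0 : 0 < p := by omega
  have hzp : 0 < z p := (apply_pos_iff hz.apply_zero).2 hp0
  have inv_eq : (z * swap p r)⁻¹ = swap p r * z := by simp [hz.inv_eq]
  have inv_left : (z * swap p r)⁻¹ p = z p := by
    simp [inv_eq, swap_apply_apply_left hp hpr]
  have inv_right : (z * swap p r)⁻¹ r = z r := by
    simp [inv_eq, hz.swap_apply_apply_right hp hpr]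
  have first := rnk_mul_swap hp0 hpr hzp hzr i j
  have second := rnk_mul_swap (w := (z * swap p r)⁻¹) hp0 hpr (by rwa [inv_left])
    (by rwa [inv_left, inv_right]) j i
  rw [← hz.conjSwap_eq, inv_left, inv_right, rnk_inv,
    (isFPFInvolution_conjSwap hz hp0 (hp0.trans hpr)).rnk_comm] at second
  omega

lemma IsFPFInvolution.even_rnk_self (hz : IsFPFInvolution z) (i : ℕ) : Even (rnk z i i) := by
  have ascents_eq_descents : #{a ∈ {a ∈ Icc 1 i | z a ∈ Icc 1 i} | a < z a} =
      #{a ∈ {a ∈ Icc 1 i | z a ∈ Icc 1 i} | ¬a < z a} := by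
    refine card_nbij' z z ?_ ?_ (fun a _ => hz.apply_apply a) fun a _ => hz.apply_apply a
    · intro a
      simp only [coe_filter, mem_filter, mem_Icc, Set.mem_ofPred_eq, hz.apply_apply]
      omega
    · intro a
      simp only [coe_filter, mem_filter, mem_Icc, Set.mem_ofPred_eq, hz.apply_apply]
      rintro ⟨h, hlt⟩
      have := hz.apply_ne h.1.1
      omega
  rw [rnk, ← card_filter_add_card_filter_not fun a => a < z a, ← ascents_eq_descents]
  exact ⟨_, rfl⟩

lemma rnk_eq_add_card (w : Perm ℕ) (hi : i ≤ i') (j : ℕ) :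
    rnk w i' j = rnk w i j + #{a ∈ Ioc i i' | w a ∈ Icc 1 j} := by
  have hdisj : Disjoint {a ∈ Icc 1 i | w a ∈ Icc 1 j} {a ∈ Ioc i i' | w a ∈ Icc 1 j} :=
    disjoint_left.2 fun a ha hb => by
      simp only [mem_filter, mem_Icc, mem_Ioc] at ha hb
      omega
  rw [rnk, rnk, ← card_union_of_disjoint hdisj, ← filter_union]
  congr 2
  ext a
  simp only [mem_Icc, mem_union, mem_Ioc]
  omega

lemma rnk_add_rnk_eq (w : Perm ℕ) (hi : i ≤ i') (hj : j' ≤ j)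
    (hgap : ∀ e, i < e → e ≤ i' → ¬(j' < w e ∧ w e ≤ j)) :
    rnk w i j + rnk w i' j' = rnk w i j' + rnk w i' j := by
  have hcongr : {a ∈ Ioc i i' | w a ∈ Icc 1 j} = {a ∈ Ioc i i' | w a ∈ Icc 1 j'} := by
    refine filter_congr fun a ha => ?_
    have := hgap a (mem_Ioc.1 ha).1 (mem_Ioc.1 ha).2
    simp only [mem_Icc]
    omega
  rw [rnk_eq_add_card w hi j, rnk_eq_add_card w hi j', hcongr]
  omega

end Rank

section AntidiagonalChains

variable {S : ℕ → ℕ → Prop} {i i' j j' a k : ℕ} {C C' D : Finset (ℕ × ℕ)}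

/-- `C` is a set of boxes of `[i] × [j]` satisfying `S` which runs strictly from north-east to
south-west, i.e. which has the form `A ⊙ B`. -/
structure IsAntidiagChain (S : ℕ → ℕ → Prop) (i j : ℕ) (C : Finset (ℕ × ℕ)) : Prop where
  subset : C ⊆ Icc 1 i ×ˢ Icc 1 j
  rel : ∀ x ∈ C, S x.1 x.2
  chain : IsChain (fun x y : ℕ × ℕ => x.1 < y.1 ∧ y.2 < x.2) (C : Set (ℕ × ℕ))

namespace IsAntidiagChain

lemma bounds (hC : IsAntidiagChain S i j C) {x : ℕ × ℕ} (hx : x ∈ C) :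
    (1 ≤ x.1 ∧ x.1 ≤ i) ∧ 1 ≤ x.2 ∧ x.2 ≤ j := by
  simpa only [mem_product, mem_Icc] using hC.subset hx

lemma mono (hC : IsAntidiagChain S i j C) (hD : D ⊆ C) : IsAntidiagChain S i j D :=
  ⟨hD.trans hC.subset, fun x hx => hC.rel x (hD hx), hC.chain.mono (coe_subset.2 hD)⟩

lemma snd_lt (hC : IsAntidiagChain S i j C) {x y : ℕ × ℕ} (hx : x ∈ C) (hy : y ∈ C)
    (hxy : x.1 < y.1) : y.2 < x.2 := by
  have := hC.chain hx hy fun h => hxy.ne (congrArg Prod.fst h)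
  omega

lemma snd_le (hC : IsAntidiagChain S i j C) {x y : ℕ × ℕ} (hx : x ∈ C) (hy : y ∈ C)
    (hxy : x.1 ≤ y.1) : y.2 ≤ x.2 := by
  rcases eq_or_ne x y with rfl | hne
  · rfl
  · have := hC.chain hx hy hne
    omega

lemma injOn_fst (hC : IsAntidiagChain S i j C) : Set.InjOn Prod.fst (C : Set (ℕ × ℕ)) := by
  intro x hx y hy hxy
  by_contra hne
  have := hC.chain hx hy hne
  omega

lemma injOn_snd (hC : IsAntidiagChain S i j C) : Set.InjOn Prod.snd (C : Set (ℕ × ℕ)) := by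
  intro x hx y hy hxy
  by_contra hne
  have := hC.chain hx hy hne
  omega

lemma image_swap [Std.Symm S] (hC : IsAntidiagChain S i j C) :
    IsAntidiagChain S j i (C.image Prod.swap) where
  subset := by
    intro x hx
    obtain ⟨y, hy, rfl⟩ := mem_image.1 hx
    have := hC.bounds hy
    simpa only [mem_product, mem_Icc, Prod.fst_swap, Prod.snd_swap] using this.symm
  rel := by
    intro x hx
    obtain ⟨y, hy, rfl⟩ := mem_image.1 hx
    exact symm (hC.rel y hy)
  chain := by
    intro x hx y hy hne
    obtain ⟨x₀, hx₀, rfl⟩ := mem_image.1 hx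
    obtain ⟨y₀, hy₀, rfl⟩ := mem_image.1 hy
    have := hC.chain hx₀ hy₀ fun h => hne (congrArg Prod.swap h)
    simp only [Prod.fst_swap, Prod.snd_swap]
    omega

end IsAntidiagChain

lemma card_image_swap (C : Finset (ℕ × ℕ)) : #(C.image Prod.swap) = #C :=
  card_image_of_injective C Prod.swap_injective

open Classical in
/-- The largest size of an antidiagonal chain of boxes of `[i] × [j]` satisfying `S`. -/
noncomputable def antidiagRank (S : ℕ → ℕ → Prop) (i j : ℕ) : ℕ :=
  {C ∈ (Icc 1 i ×ˢ Icc 1 j).powerset | IsAntidiagChain S i j C}.sup card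

lemma le_antidiagRank_iff : k ≤ antidiagRank S i j ↔ ∃ C, IsAntidiagChain S i j C ∧ #C = k := by
  classical
  constructor
  · intro hk
    have hempty : IsAntidiagChain S i j ∅ := ⟨empty_subset _, by simp, by simp⟩
    obtain ⟨C, hC, hsup⟩ := exists_mem_eq_sup
      {C ∈ (Icc 1 i ×ˢ Icc 1 j).powerset | IsAntidiagChain S i j C}
      ⟨∅, mem_filter.2 ⟨empty_mem_powerset _, hempty⟩⟩ card
    obtain ⟨D, hDC, hD⟩ := exists_subset_card_eq (hk.trans (by rw [antidiagRank]; exact hsup.le))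
    exact ⟨D, (mem_filter.1 hC).2.mono hDC, hD⟩
  · rintro ⟨C, hC, rfl⟩
    exact le_sup (f := card) (mem_filter.2 ⟨mem_powerset.2 hC.subset, hC⟩)

lemma exists_card_eq_antidiagRank (S : ℕ → ℕ → Prop) (i j : ℕ) :
    ∃ C, IsAntidiagChain S i j C ∧ #C = antidiagRank S i j :=
  le_antidiagRank_iff.1 le_rfl

lemma IsAntidiagChain.card_le (hC : IsAntidiagChain S i j C) : #C ≤ antidiagRank S i j :=
  le_antidiagRank_iff.2 ⟨C, hC, rfl⟩

lemma antidiagRank_comm (S : ℕ → ℕ → Prop) [Std.Symm S] (i j : ℕ) :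
    antidiagRank S i j = antidiagRank S j i := by
  have le_swap : ∀ i j, antidiagRank S i j ≤ antidiagRank S j i := fun i j => by
    obtain ⟨C, hC, hcard⟩ := exists_card_eq_antidiagRank S i j
    rw [← hcard, ← card_image_swap]
    exact hC.image_swap.card_le
  exact (le_swap i j).antisymm (le_swap j i)

lemma one_le_antidiagRank {b : ℕ} (ha : 1 ≤ a) (hai : a ≤ i) (hb : 1 ≤ b) (hbj : b ≤ j)
    (hS : S a b) : 1 ≤ antidiagRank S i j :=
  le_antidiagRank_iff.2 ⟨{(a, b)}, ⟨by simp [*], by simp [*], by simp⟩, card_singleton _⟩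

lemma antidiagRank_le_of_forall_not {p q : ℕ}
    (hS : ∀ a b, 1 ≤ a → a ≤ p → 1 ≤ b → b ≤ q → ¬S a b) :
    antidiagRank S i j ≤ (i - p) + (j - q) := by
  obtain ⟨C, hC, hcard⟩ := exists_card_eq_antidiagRank S i j
  have below : #{x ∈ C | p < x.1} ≤ #(Ioc p i) :=
    card_le_card_of_injOn Prod.fst
      (fun x hx => mem_Ioc.2 ⟨(mem_filter.1 hx).2, (hC.bounds (mem_filter.1 hx).1).1.2⟩)
      (hC.injOn_fst.mono (coe_subset.2 (filter_subset _ _)))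
  have right : #{x ∈ C | ¬p < x.1} ≤ #(Ioc q j) := by
    refine card_le_card_of_injOn Prod.snd (fun x hx => mem_Ioc.2 ?_)
      (hC.injOn_snd.mono (coe_subset.2 (filter_subset _ _)))
    obtain ⟨hxC, hxp⟩ := mem_filter.1 hx
    obtain ⟨⟨hx1, -⟩, hx2, hxj⟩ := hC.bounds hxC
    exact ⟨not_le.1 fun hxq => hS _ _ hx1 (not_lt.1 hxp) hx2 hxq (hC.rel x hxC), hxj⟩
  rw [← hcard, ← card_filter_add_card_filter_not fun x : ℕ × ℕ => p < x.1]
  simpa only [Nat.card_Ioc] using add_le_add below right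

/-- The part of `C` above row `a` together with the part of `C'` from row `a` on. -/
def splice (a : ℕ) (C C' : Finset (ℕ × ℕ)) : Finset (ℕ × ℕ) :=
  {x ∈ C | x.1 < a} ∪ {x ∈ C' | ¬x.1 < a}

lemma mem_splice {x : ℕ × ℕ} :
    x ∈ splice a C C' ↔ (x ∈ C ∧ x.1 < a) ∨ (x ∈ C' ∧ a ≤ x.1) := by
  simp [splice]

lemma card_splice_add_card_splice (a : ℕ) (C C' : Finset (ℕ × ℕ)) :
    #(splice a C C') + #(splice a C' C) = #C + #C' := by
  have hdisj : ∀ C C' : Finset (ℕ × ℕ), Disjoint {x ∈ C | x.1 < a} {x ∈ C' | ¬x.1 < a} :=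
    fun C C' => disjoint_left.2 fun x hx hx' => (mem_filter.1 hx').2 (mem_filter.1 hx).2
  rw [splice, splice, card_union_of_disjoint (hdisj C C'), card_union_of_disjoint (hdisj C' C),
    ← card_filter_add_card_filter_not (s := C) fun x : ℕ × ℕ => x.1 < a,
    ← card_filter_add_card_filter_not (s := C') fun x : ℕ × ℕ => x.1 < a]
  omega

lemma IsAntidiagChain.splice {i₁ i₂ j₁ j₂ : ℕ} (hC : IsAntidiagChain S i₁ j₁ C)
    (hC' : IsAntidiagChain S i₂ j₂ C') (hsub : splice a C C' ⊆ Icc 1 i ×ˢ Icc 1 j)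
    (hcross : ∀ x ∈ C, x.1 < a → ∀ y ∈ C', a ≤ y.1 → y.2 < x.2) :
    IsAntidiagChain S i j (splice a C C') where
  subset := hsub
  rel x hx := (mem_splice.1 hx).elim (fun h => hC.rel x h.1) fun h => hC'.rel x h.1
  chain := by
    intro x hx y hy hne
    rcases mem_splice.1 hx with ⟨hx, hxa⟩ | ⟨hx, hxa⟩ <;>
      rcases mem_splice.1 hy with ⟨hy, hya⟩ | ⟨hy, hya⟩
    · exact hC.chain hx hy hne
    · exact Or.inl ⟨hxa.trans_le hya, hcross x hx hxa y hy hya⟩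
    · exact Or.inr ⟨hya.trans_le hxa, hcross y hy hya x hx hxa⟩
    · exact hC'.chain hx hy hne

-- `a` is the least row at which one may switch from `C'` to `C`; minimality makes it possible to
-- switch from `C` to `C'` there as well.
lemma IsAntidiagChain.exists_crossing_row (hC : IsAntidiagChain S i j C)
    (hC' : IsAntidiagChain S i' j' C') :
    ∃ a ≤ i + 1, (∀ y ∈ C, a ≤ y.1 → y.2 ≤ j') ∧
      (∀ x ∈ C', x.1 < a → ∀ y ∈ C, a ≤ y.1 → y.2 < x.2) ∧
      ∀ x ∈ C, x.1 < a → ∀ y ∈ C', a ≤ y.1 → y.2 < x.2 := by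
  classical
  let Admissible (a : ℕ) : Prop :=
    ∀ y ∈ C, a ≤ y.1 → y.2 ≤ j' ∧ ∀ x ∈ C', x.1 < a → y.2 < x.2
  have hlast : Admissible (i + 1) := fun y hy hyi => absurd (hC.bounds hy).1.2 (by omega)
  have hex : ∃ a, Admissible a := ⟨i + 1, hlast⟩
  have hadm := Nat.find_spec hex
  refine ⟨Nat.find hex, Nat.find_min' hex hlast, fun y hy hya => (hadm y hy hya).1,
    fun x hx hxa y hy hya => (hadm y hy hya).2 x hx hxa, fun x hx hxa y hy hya => ?_⟩
  have hmin := Nat.find_min hex (m := Nat.find hex - 1) (by omega)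
  simp only [Admissible] at hmin
  push Not at hmin
  obtain ⟨y₀, hy₀, hle, hbad⟩ := hmin
  have hx_le : x.1 ≤ y₀.1 := by omega
  have hsnd : y₀.2 ≤ x.2 := hC.snd_le hx hy₀ hx_le
  by_cases hy₀j : y₀.2 ≤ j'
  · obtain ⟨x', hx', hlt, hge⟩ := hbad hy₀j
    have := hC'.snd_lt hx' hy (by omega)
    omega
  · have := (hC'.bounds hy).2.2
    omega

theorem antidiagRank_add_antidiagRank_le (S : ℕ → ℕ → Prop) (hi : i ≤ i') (hj : j' ≤ j) :
    antidiagRank S i j + antidiagRank S i' j' ≤ antidiagRank S i j' + antidiagRank S i' j := by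
  obtain ⟨C, hC, hcard⟩ := exists_card_eq_antidiagRank S i j
  obtain ⟨C', hC', hcard'⟩ := exists_card_eq_antidiagRank S i' j'
  obtain ⟨a, hai, hle, hcross, hcross'⟩ := hC.exists_crossing_row hC'
  have small : IsAntidiagChain S i j' (splice a C' C) := by
    refine hC'.splice hC (fun x hx => ?_) hcross
    rw [mem_product, mem_Icc, mem_Icc]
    rcases mem_splice.1 hx with ⟨hx, hxa⟩ | ⟨hx, hxa⟩
    · have := hC'.bounds hx
      omega
    · exact ⟨(hC.bounds hx).1, (hC.bounds hx).2.1, hle x hx hxa⟩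
  have large : IsAntidiagChain S i' j (splice a C C') := by
    refine hC.splice hC' (fun x hx => ?_) hcross'
    rw [mem_product, mem_Icc, mem_Icc]
    rcases mem_splice.1 hx with ⟨hx, -⟩ | ⟨hx, -⟩
    · have := hC.bounds hx
      omega
    · have := hC'.bounds hx
      omega
  have := card_splice_add_card_splice a C C'
  have := small.card_le
  have := large.card_le
  omega

lemma IsAntidiagChain.union_image_swap [Std.Symm S] (hC : IsAntidiagChain S i i C)
    (hlt : ∀ x ∈ C, x.1 < x.2) : IsAntidiagChain S i i (C ∪ C.image Prod.swap) where
  subset := union_subset hC.subset hC.image_swap.subset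
  rel x hx := (mem_union.1 hx).elim (hC.rel x) (hC.image_swap.rel x)
  chain := by
    have cross : ∀ x ∈ C, ∀ y ∈ C, x.1 < y.2 := fun x hx y hy => by
      have := hlt x hx
      have := hlt y hy
      rcases lt_or_ge x.1 y.1 with h | h
      · omega
      · have := hC.snd_le hy hx h
        omega
    intro x hx y hy hne
    rcases mem_union.1 hx with hx | hx <;> rcases mem_union.1 hy with hy | hy
    · exact hC.chain hx hy hne
    · obtain ⟨y₀, hy₀, rfl⟩ := mem_image.1 hy
      exact Or.inl ⟨cross x hx y₀ hy₀, cross y₀ hy₀ x hx⟩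
    · obtain ⟨x₀, hx₀, rfl⟩ := mem_image.1 hx
      exact Or.inr ⟨cross y hy x₀ hx₀, cross x₀ hx₀ y hy⟩
    · exact hC.image_swap.chain hx hy hne

lemma IsAntidiagChain.two_mul_card_le [Std.Symm S] (hC : IsAntidiagChain S i i C)
    (hlt : ∀ x ∈ C, x.1 < x.2) : 2 * #C ≤ antidiagRank S i i := by
  have hdisj : Disjoint C (C.image Prod.swap) := disjoint_left.2 fun x hx hx' => by
    obtain ⟨y, hy, rfl⟩ := mem_image.1 hx'
    exact (hlt y hy).asymm (hlt y.swap hx)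
  have := (hC.union_image_swap hlt).card_le
  rwa [card_union_of_disjoint hdisj, card_image_swap, ← two_mul] at this

lemma even_antidiagRank_self (S : ℕ → ℕ → Prop) [Std.Symm S] [Std.Irrefl S] (i : ℕ) :
    Even (antidiagRank S i i) := by
  obtain ⟨C, hC, hcard⟩ := exists_card_eq_antidiagRank S i i
  have upper := (hC.mono (filter_subset (fun x => x.1 < x.2) C)).two_mul_card_le
    fun x hx => (mem_filter.1 hx).2
  have lower : 2 * #{x ∈ C | ¬x.1 < x.2} ≤ antidiagRank S i i := by
    rw [← card_image_swap]
    refine (hC.mono (filter_subset _ C)).image_swap.two_mul_card_le fun x hx => ?_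
    obtain ⟨y, hy, rfl⟩ := mem_image.1 hx
    obtain ⟨hyC, hle⟩ := mem_filter.1 hy
    exact (not_lt.1 hle).lt_of_ne fun h => irrefl_of S y.1 (by simpa only [h] using hC.rel y hyC)
  have := card_filter_add_card_filter_not (s := C) fun x : ℕ × ℕ => x.1 < x.2
  rw [Nat.even_iff]
  omega

end AntidiagonalChains

section TightBoxes

variable {S : ℕ → ℕ → Prop} {w z : Perm ℕ} {n p r i i' j j' : ℕ}

/-- No antidiagonal chain of boxes of `[n] × [n]` satisfying `S` violates the rank conditions
of `w`. -/
def RankBounded (S : ℕ → ℕ → Prop) (n : ℕ) (w : Perm ℕ) : Prop :=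
  ∀ i ≤ n, ∀ j ≤ n, antidiagRank S i j ≤ rnk w i j

lemma exists_rnk_lt_of_not_rankBounded [Std.Symm S] (hz : IsFPFInvolution z)
    (h : ¬RankBounded S n z) : ∃ i j, j ≤ i ∧ i ≤ n ∧ rnk z i j < antidiagRank S i j := by
  simp only [RankBounded] at h
  push Not at h
  obtain ⟨i, hin, j, hjn, hlt⟩ := h
  rcases le_total j i with hji | hij
  · exact ⟨i, j, hji, hin, hlt⟩
  · exact ⟨j, i, hij, hjn, by rwa [hz.rnk_comm, antidiagRank_comm S]⟩

/-- The rank condition of `w` at the box `(i, j)` of `[n] × [n]` is attained by an antidiagonal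
chain of boxes satisfying `S`. -/
structure IsTight (S : ℕ → ℕ → Prop) (n : ℕ) (w : Perm ℕ) (i j : ℕ) : Prop where
  row_le : i ≤ n
  col_le : j ≤ n
  rnk_le : rnk w i j ≤ antidiagRank S i j

lemma IsTight.swap [Std.Symm S] (hz : IsFPFInvolution z) (h : IsTight S n z i j) :
    IsTight S n z j i :=
  ⟨h.col_le, h.row_le, by rw [hz.rnk_comm, antidiagRank_comm S]; exact h.rnk_le⟩

lemma RankBounded.isTight_uncross (hb : RankBounded S n w) (h : IsTight S n w i j)
    (h' : IsTight S n w i' j') (hi : i ≤ i') (hj : j' ≤ j)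
    (hgap : ∀ e, i < e → e ≤ i' → ¬(j' < w e ∧ w e ≤ j)) : IsTight S n w i j' := by
  refine ⟨h.row_le, h'.col_le, ?_⟩
  have := antidiagRank_add_antidiagRank_le S hi hj
  have := rnk_add_rnk_eq w hi hj hgap
  have := hb i' h'.row_le j h.col_le
  have := h.rnk_le
  have := h'.rnk_le
  omega

-- Uncrossing `(i, j)` with `(j, i)` leaves a total defect of at most two on the diagonal, where
-- every defect is even.
lemma RankBounded.isTight_diag [Std.Symm S] [Std.Irrefl S] (hz : IsFPFInvolution z)
    (hb : RankBounded S n z) (hji : j ≤ i) (hin : i ≤ n)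
    (hgap : ∀ e, j < e → e ≤ i → ¬(j < z e ∧ z e ≤ i))
    (hdefect : rnk z i j ≤ antidiagRank S i j + 1) :
    IsTight S n z i i ∨ IsTight S n z j j := by
  have hjn := hji.trans hin
  have hsuper := antidiagRank_add_antidiagRank_le S hji hji
  have hmod := rnk_add_rnk_eq z hji hji hgap
  rw [antidiagRank_comm S j i] at hsuper
  rw [hz.rnk_comm j i] at hmod
  obtain ⟨a, ha⟩ := even_antidiagRank_self S j
  obtain ⟨b, hb'⟩ := hz.even_rnk_self j
  have := hb i hin i hin
  have := hb j hjn j hjn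
  by_cases hii : rnk z i i ≤ antidiagRank S i i
  · exact Or.inl ⟨hin, hin, hii⟩
  · exact Or.inr ⟨hjn, hjn, by omega⟩

lemma IsBruhatCover.exists_isTight_of_not_rankBounded [Std.Symm S] [Std.Irrefl S]
    (hz : IsFPFInvolution z) (hp : z p < p) (hr : IsBruhatCover z p r)
    (hb : RankBounded S n z) (hv : ¬RankBounded S n (conjSwap z p r)) :
    ∃ i ∈ Ico p r, ∃ j ∈ Ico (z p) (z r), IsTight S n z i j := by
  obtain ⟨hpr, hzr, hgap⟩ := hr
  have hv' := isFPFInvolution_conjSwap hz (p := p) (r := r) (by omega) (by omega)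
  obtain ⟨i, j, hji, hin, hviol⟩ := exists_rnk_lt_of_not_rankBounded hv' hv
  have hjn := hji.trans hin
  have hrnk := hz.rnk_conjSwap hp hpr hzr i j
  have hbij := hb i hin j hjn
  simp only [mem_Ico]
  by_cases hbox : (p ≤ i ∧ i < r) ∧ z p ≤ j ∧ j < z r <;>
    by_cases hbox' : (p ≤ j ∧ j < r) ∧ z p ≤ i ∧ i < z r
  · rw [if_pos hbox, if_pos hbox'] at hrnk
    rcases hb.isTight_diag hz hji hin (fun e hje hei he =>
      hgap e (by omega) (by omega) (by omega)) (by omega) with htight | htight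
    · exact ⟨i, hbox.1, i, hbox'.2, htight⟩
    · exact ⟨j, hbox'.1, j, hbox.2, htight⟩
  · rw [if_pos hbox, if_neg hbox'] at hrnk
    exact ⟨i, hbox.1, j, hbox.2, hin, hjn, by omega⟩
  · rw [if_neg hbox, if_pos hbox'] at hrnk
    exact ⟨j, hbox'.1, i, hbox'.2, IsTight.swap hz ⟨hin, hjn, by omega⟩⟩
  · rw [if_neg hbox, if_neg hbox'] at hrnk
    omega

lemma IsBruhatCover.apply_right (hz : IsFPFInvolution z) (hr : IsBruhatCover z p r)
    (hp : z p < p) (hpr : p < z r) (hlt : z r < r) : IsBruhatCover z p (z r) := by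
  obtain ⟨-, -, hgap⟩ := hr
  refine ⟨hpr, by rw [hz.apply_apply]; omega, fun e hpe her he => ?_⟩
  rw [hz.apply_apply] at he
  have := hgap e hpe (by omega)
  have hne : z e ≠ z r := fun h => by have := z.injective h; omega
  have := hgap (z e) (by omega) he.2
  rw [hz.apply_apply] at this
  omega

lemma exists_isTight_of_isBruhatCover [Std.Symm S] [Std.Irrefl S] (hz : z ∈ IFPFInfty)
    (hp : z p < p) (hb : RankBounded S n z) (hPsi : ∀ v ∈ PsiSet z p, ¬RankBounded S n v)
    (hr : IsBruhatCover z p r) : ∃ i ∈ Ico p r, ∃ j ∈ Ico (z p) (z r), IsTight S n z i j := by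
  have hz' := isFPFInvolution_of_mem_IFPFInfty hz
  by_cases hE : p < z r ∧ z r < r
  · have hr' := hr.apply_right hz' hp hE.1 hE.2
    have hmem : conjSwap z p (z r) ∈ PsiSet z p :=
      (mem_PsiSet_iff hz hp).2 ⟨z r, hr', by rw [hz'.apply_apply]; omega, rfl⟩
    obtain ⟨i, hi, j, hj, htight⟩ :=
      hr'.exists_isTight_of_not_rankBounded hz' hp hb (hPsi _ hmem)
    rw [hz'.apply_apply] at hj
    simp only [mem_Ico] at hi hj ⊢
    by_cases hpj : p ≤ j
    · exact ⟨j, ⟨hpj, hj.2⟩, i, ⟨by omega, hi.2⟩, htight.swap hz'⟩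
    · exact ⟨i, ⟨hi.1, by omega⟩, j, ⟨hj.1, by omega⟩, htight⟩
  · exact hr.exists_isTight_of_not_rankBounded hz' hp hb
      (hPsi _ ((mem_PsiSet_iff hz hp).2 ⟨r, hr, hE, rfl⟩))

lemma exists_lt_and_apply_lt_apply (w : Perm ℕ) (p : ℕ) : ∃ e, p < e ∧ w p < w e := by
  let m := (range (p + 1)).sup w + 1
  have lt_m : ∀ a ≤ p, w a < m := fun a ha =>
    Nat.lt_succ_of_le (le_sup (f := w) (mem_range.2 (Nat.lt_succ_of_le ha)))
  refine ⟨w.symm m, not_le.1 fun hle => ?_, by simpa using lt_m p le_rfl⟩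
  simpa using lt_m _ hle

lemma exists_isTight_of_row_gap (hcover : ∀ r, IsBruhatCover w p r →
      ∃ i ∈ Ico p r, ∃ j ∈ Ico (w p) (w r), IsTight S n w i j) :
    ∃ j i, p ≤ i ∧ w p ≤ j ∧ (∀ e, p < e → e ≤ i → ¬w p < w e) ∧ IsTight S n w i j := by
  obtain ⟨r, hr⟩ := exists_minimal_of_wellFoundedLT _ (exists_lt_and_apply_lt_apply w p)
  have hfirst {e : ℕ} (he : e < r) : ¬(p < e ∧ w p < w e) := hr.not_prop_of_lt he
  obtain ⟨i, hi, j, hj, htight⟩ := hcover r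
    ⟨hr.prop.1, hr.prop.2, fun e hpe her he => hfirst her ⟨hpe, he.1⟩⟩
  rw [mem_Ico] at hi hj
  exact ⟨j, i, hi.1, hj.1, fun e hpe hei he => hfirst (by omega) ⟨hpe, he⟩, htight⟩

-- Take the leftmost box of the previous lemma. A dot `(r, w r)` violating the column condition
-- would give another tight box, and uncrossing the two would give one further to the left.
lemma exists_isTight_of_row_col_gap (hb : RankBounded S n w)
    (hcover : ∀ r, IsBruhatCover w p r →
      ∃ i ∈ Ico p r, ∃ j ∈ Ico (w p) (w r), IsTight S n w i j) :
    ∃ i j, p ≤ i ∧ w p ≤ j ∧ (∀ e, p < e → e ≤ i → ¬w p < w e) ∧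
      (∀ e, p < e → ¬(w p < w e ∧ w e ≤ j)) ∧ IsTight S n w i j := by
  obtain ⟨j, hmin⟩ := exists_minimal_of_wellFoundedLT _ (exists_isTight_of_row_gap hcover)
  obtain ⟨i, hpi, hpj, hrow, htight⟩ := hmin.prop
  refine ⟨i, j, hpi, hpj, hrow, ?_, htight⟩
  by_contra! hcol
  obtain ⟨r, hr⟩ := exists_minimal_of_wellFoundedLT _ hcol
  have hfirst {e : ℕ} (he : e < r) : ¬(p < e ∧ w p < w e ∧ w e ≤ j) := hr.not_prop_of_lt he
  obtain ⟨hpr, hwr, hrj⟩ := hr.prop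
  obtain ⟨i', hi', j', hj', htight'⟩ := hcover r
    ⟨hpr, hwr, fun e hpe her he => hfirst her ⟨hpe, he.1, by omega⟩⟩
  rw [mem_Ico] at hi' hj'
  have hj'j : j' < j := by omega
  refine hmin.not_prop_of_lt hj'j ?_
  rcases le_total i' i with hle | hle
  · exact ⟨i', hi'.1, hj'.1, fun e hpe hei => hrow e hpe (hei.trans hle), htight'⟩
  · exact ⟨i, hpi, hj'.1, hrow, hb.isTight_uncross htight htight' hle hj'j.le
      fun e hie hei he => hfirst (by omega) ⟨by omega, by omega, he.2⟩⟩

lemma add_add_one_le_rnk (hw : w 0 = 0) (hp : 0 < p) (hpi : p ≤ i) (hpj : w p ≤ j)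
    (hrow : ∀ e, p < e → e ≤ i → ¬w p < w e)
    (hcol : ∀ e, p < e → ¬(w p < w e ∧ w e ≤ j)) :
    (i - p) + (j - w p) + 1 ≤ rnk w i j := by
  have below : #{a ∈ Ioc p i | w a ∈ Icc 1 j} = i - p := by
    rw [filter_true_of_mem, Nat.card_Ioc]
    intro a ha
    rw [mem_Ioc] at ha
    have := hrow a ha.1 ha.2
    exact mem_Icc.2 ⟨(apply_pos_iff hw).2 (by omega), by omega⟩
  have above : #(Icc (w p) j) ≤ rnk w p j := by
    refine card_le_card_of_injOn w.symm (fun b hb => ?_) w.symm.injective.injOn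
    obtain ⟨hpb, hbj⟩ := mem_Icc.1 hb
    have hle : w.symm b ≤ p := not_lt.1 fun hlt => hcol _ hlt (by
      have hne : w p ≠ b := fun h => by simp [← h] at hlt
      rw [w.apply_symm_apply]
      omega)
    have hb0 : 0 < b := ((apply_pos_iff hw).2 hp).trans_le hpb
    simp only [coe_filter, Set.mem_ofPred_eq, mem_Icc, w.apply_symm_apply]
    exact ⟨⟨(apply_pos_iff hw).1 (by rwa [w.apply_symm_apply]), hle⟩, hb0, hbj⟩
  rw [rnk_eq_add_card w hpi j, below]
  rw [Nat.card_Icc] at above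
  omega

lemma rnk_eq_zero_of_corner (hcorner : ∀ a, 1 ≤ a → a < p → w p < w a) {a b : ℕ}
    (ha : a ≤ p) (hb : b ≤ w p) (hne : (a, b) ≠ (p, w p)) : rnk w a b = 0 := by
  rw [rnk, card_eq_zero, filter_eq_empty_iff]
  intro c hc hcb
  rw [mem_Icc] at hc hcb
  rcases (hc.2.trans ha).eq_or_lt with rfl | hlt
  · exact hne (Prod.ext (by omega) (by omega))
  · have := hcorner c hc.1 hlt
    omega

theorem RankBounded.rel_corner [Std.Symm S] [Std.Irrefl S] (hz : z ∈ IFPFInfty) (hp : z p < p)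
    (hpn : p ≤ n) (hcorner : ∀ a, 1 ≤ a → a < p → z p < z a) (hb : RankBounded S n z)
    (hPsi : ∀ v ∈ PsiSet z p, ¬RankBounded S n v) : S p (z p) := by
  by_contra hS
  obtain ⟨i, j, hpi, hpj, hrow, hcol, htight⟩ := exists_isTight_of_row_col_gap hb fun r =>
    exists_isTight_of_isBruhatCover hz hp hb hPsi
  have lower := add_add_one_le_rnk hz.1 (by omega) hpi hpj hrow hcol
  have upper : antidiagRank S i j ≤ (i - p) + (j - z p) :=
    antidiagRank_le_of_forall_not fun a b ha hap hb1 hbq hab => by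
      have hne : (a, b) ≠ (p, z p) := fun h => by
        obtain ⟨rfl, rfl⟩ := Prod.mk.inj h
        exact hS hab
      have := hb a (hap.trans hpn) b (by omega)
      rw [rnk_eq_zero_of_corner hcorner hap hbq hne] at this
      have := one_le_antidiagRank ha le_rfl hb1 le_rfl hab
      omega
  have := htight.rnk_le
  omega

end TightBoxes

section AntidiagonalSets

variable {α β : Type*} [LinearOrder α] [LinearOrder β]

/-- The set `A ⊙ B`, pairing the increasing enumeration of `A` with the decreasing one of `B`. -/
def antidiag (A : Finset α) (B : Finset β) (h : #A = #B) : Finset (α × β) :=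
  univ.image fun t : Fin #A => (A.orderEmbOfFin rfl t, B.orderEmbOfFin h.symm t.rev)

variable {A : Finset α} {B : Finset β} {D : Finset (α × β)}

lemma card_antidiag (h : #A = #B) : #(antidiag A B h) = #A := by
  rw [antidiag, card_image_of_injective, card_univ, Fintype.card_fin]
  exact fun t t' htt' => (A.orderEmbOfFin rfl).injective (Prod.ext_iff.1 htt').1

lemma antidiag_subset_product (h : #A = #B) : antidiag A B h ⊆ A ×ˢ B := by
  intro x hx
  obtain ⟨t, -, rfl⟩ := mem_image.1 hx
  exact mem_product.2 ⟨orderEmbOfFin_mem _ _ _, orderEmbOfFin_mem _ _ _⟩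

lemma isChain_antidiag (h : #A = #B) :
    IsChain (fun x y : α × β => x.1 < y.1 ∧ y.2 < x.2) (antidiag A B h : Set (α × β)) := by
  intro x hx y hy hne
  obtain ⟨t, -, rfl⟩ := mem_image.1 hx
  obtain ⟨t', -, rfl⟩ := mem_image.1 hy
  simp only [OrderEmbedding.lt_iff_lt, Fin.rev_lt_rev, and_self]
  exact lt_or_gt_of_ne fun htt' => hne (by rw [htt'])

lemma exists_antidiag_eq_of_isChain
    (hD : IsChain (fun x y : α × β => x.1 < y.1 ∧ y.2 < x.2) (D : Set (α × β))) :
    ∃ h : #(D.image Prod.fst) = #(D.image Prod.snd),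
      antidiag (D.image Prod.fst) (D.image Prod.snd) h = D := by
  have snd_lt {x y : α × β} (hx : x ∈ D) (hy : y ∈ D) (hxy : x.1 < y.1) : y.2 < x.2 :=
    (hD hx hy fun h => hxy.ne (congrArg Prod.fst h)).elim (·.2) fun h => absurd h.1 hxy.asymm
  have hcard : #(D.image Prod.fst) = #D := card_image_of_injOn fun x hx y hy hxy =>
    by_contra fun hne => (hD hx hy hne).elim (fun h => h.1.ne hxy) fun h => h.1.ne' hxy
  have hcard' : #(D.image Prod.snd) = #D := card_image_of_injOn fun x hx y hy hxy =>
    by_contra fun hne => (hD hx hy hne).elim (fun h => h.2.ne' hxy) fun h => h.2.ne hxy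
  have h := hcard.trans hcard'.symm
  have hlift (t) : ∃ x ∈ D, x.1 = (D.image Prod.fst).orderEmbOfFin rfl t :=
    mem_image.1 (orderEmbOfFin_mem _ _ t)
  choose x hxD hx using hlift
  have hsnd (t) : (x t).2 = (D.image Prod.snd).orderEmbOfFin h.symm t.rev := by
    have := orderEmbOfFin_unique h.symm (f := fun t => (x t.rev).2)
      (fun t => mem_image_of_mem _ (hxD _)) fun t t' htt' => snd_lt (hxD _) (hxD _) (by
        rw [hx, hx]
        exact (orderEmbOfFin _ _).strictMono (Fin.rev_lt_rev.2 htt'))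
    simpa only [Fin.rev_rev] using congrFun this t.rev
  refine ⟨h, eq_of_subset_of_card_le (fun y hy => ?_) ?_⟩
  · obtain ⟨t, -, rfl⟩ := mem_image.1 hy
    rw [← hx, ← hsnd]
    exact hxD t
  · rw [card_antidiag, hcard]

end AntidiagonalSets

section Monomials

variable {n i j : ℕ} {S : ℕ → ℕ → Prop} {D : Finset (Fin n × Fin n)} {C : Finset (ℕ × ℕ)}
  {m : SSVar n →₀ ℕ} {w z : Perm ℕ}

/-- The passage from the `0`-indexed positions of an `n × n` matrix to the boxes of
`[n] × [n]`. -/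
def boxEmb (n : ℕ) : Fin n × Fin n ↪ ℕ × ℕ where
  toFun x := (x.1 + 1, x.2 + 1)
  inj' x y h := by
    simp only [Prod.mk.injEq, add_left_inj, Fin.val_inj] at h
    exact Prod.ext h.1 h.2

lemma boxEmb_apply (x : Fin n × Fin n) : boxEmb n x = (x.1.1 + 1, x.2.1 + 1) := rfl

lemma exists_map_boxEmb_eq (hC : C ⊆ Icc 1 n ×ˢ Icc 1 n) :
    ∃ D : Finset (Fin n × Fin n), C = D.map (boxEmb n) := by
  suffices h : C ⊆ univ.map (boxEmb n) by
    obtain ⟨D, -, hD⟩ := subset_map_iff.1 h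
    exact ⟨D, hD⟩
  rintro ⟨a, b⟩ hx
  obtain ⟨⟨ha, han⟩, hb, hbn⟩ := by simpa only [mem_product, mem_Icc] using hC hx
  exact mem_map.2 ⟨(⟨a - 1, by omega⟩, ⟨b - 1, by omega⟩), mem_univ _,
    Prod.ext (Nat.sub_add_cancel ha) (Nat.sub_add_cancel hb)⟩

lemma isAntidiagChain_map_boxEmb_iff :
    IsAntidiagChain S i j (D.map (boxEmb n)) ↔
      IsChain (fun x y => x.1 < y.1 ∧ y.2 < x.2) (D : Set (Fin n × Fin n)) ∧
        (∀ x ∈ D, x.1 + 1 ≤ i ∧ x.2 + 1 ≤ j) ∧ ∀ x ∈ D, S (x.1 + 1) (x.2 + 1) := by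
  constructor
  · intro hC
    refine ⟨fun x hx y hy hne => ?_, fun x hx => ?_, fun x hx => ?_⟩
    · simpa [boxEmb_apply] using hC.chain (mem_map_of_mem _ hx) (mem_map_of_mem _ hy)
        ((boxEmb n).injective.ne hne)
    · have := hC.bounds (mem_map_of_mem _ hx)
      exact ⟨this.1.2, this.2.2⟩
    · exact hC.rel _ (mem_map_of_mem _ hx)
  · rintro ⟨hchain, hle, hrel⟩
    refine ⟨fun x hx => ?_, fun x hx => ?_, fun x hx y hy hne => ?_⟩
    · obtain ⟨x₀, hx₀, rfl⟩ := mem_map.1 hx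
      simpa [boxEmb_apply] using hle x₀ hx₀
    · obtain ⟨x₀, hx₀, rfl⟩ := mem_map.1 hx
      exact hrel x₀ hx₀
    · obtain ⟨x₀, hx₀, rfl⟩ := mem_map.1 hx
      obtain ⟨y₀, hy₀, rfl⟩ := mem_map.1 hy
      simpa [boxEmb_apply] using hchain hx₀ hy₀ fun h => hne (congrArg _ h)

/-- The boxes, on either side of the diagonal, whose variables divide the monomial with
exponent `m`. -/
def supportRel (m : SSVar n →₀ ℕ) (a b : ℕ) : Prop :=
  ∃ v ∈ m.support, boxEmb n v.1 = (a, b) ∨ boxEmb n v.1 = (b, a)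

instance : Std.Symm (supportRel m) where
  symm _ _ := fun ⟨v, hv, h⟩ => ⟨v, hv, h.symm⟩

instance : Std.Irrefl (supportRel m) where
  irrefl a := by
    rintro ⟨v, -, h⟩
    have : (v.1.2 : ℕ) < v.1.1 := v.2
    simp only [or_self, boxEmb_apply, Prod.mk.injEq] at h
    omega

lemma supportRel_iff_mem_support (v : SSVar n) :
    supportRel m (v.1.1 + 1) (v.1.2 + 1) ↔ v ∈ m.support := by
  refine ⟨?_, fun hv => ⟨v, hv, Or.inl rfl⟩⟩
  rintro ⟨u, hu, h⟩
  have : (u.1.2 : ℕ) < u.1.1 := u.2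
  have : (v.1.2 : ℕ) < v.1.1 := v.2
  have huv : boxEmb n u.1 = boxEmb n v.1 := h.resolve_right fun h => by
    simp only [boxEmb_apply, Prod.mk.injEq] at h
    omega
  rwa [← Subtype.ext ((boxEmb n).injective huv)]

lemma supportRel_iff_ssvar_mem_support {p q : ℕ} (hp : p ≤ n) (hq : 1 ≤ q) (hqp : q < p) :
    supportRel m p q ↔ ssvar p q hp hq hqp ∈ m.support := by
  rw [← supportRel_iff_mem_support]
  simp only [ssvar, Nat.sub_add_cancel hq, Nat.sub_add_cancel (hq.trans hqp.le)]

/-- The exponent of the square-free product of the variables at the positions in `D` and at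
their transposes. -/
noncomputable def pairExponent (D : Finset (Fin n × Fin n)) : SSVar n →₀ ℕ :=
  ∑ v with v.1 ∈ D ∨ v.1.swap ∈ D, Finsupp.single v 1

lemma pairExponent_le_iff :
    pairExponent D ≤ m ↔ ∀ v : SSVar n, v.1 ∈ D ∨ v.1.swap ∈ D → v ∈ m.support := by
  have apply_eq (v : SSVar n) :
      pairExponent D v = if v.1 ∈ D ∨ v.1.swap ∈ D then 1 else 0 := by
    simp [pairExponent, Finsupp.finsetSum_apply, Finsupp.single_apply]
  simp only [Finsupp.le_def, apply_eq, Finsupp.mem_support_iff]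
  refine forall_congr' fun v => ?_
  split_ifs with hv
  · simp [hv, Nat.one_le_iff_ne_zero]
  · simp [hv]

lemma forall_supportRel_iff :
    (∀ x ∈ D, supportRel m (x.1 + 1) (x.2 + 1)) ↔ (∀ x ∈ D, x.1 ≠ x.2) ∧ pairExponent D ≤ m := by
  rw [pairExponent_le_iff]
  constructor
  · intro h
    refine ⟨fun x hx hxx => irrefl_of (supportRel m) _ (by simpa only [hxx] using h x hx), ?_⟩
    exact fun v hv => (supportRel_iff_mem_support v).1 (hv.elim (h _) fun hv => symm (h _ hv))
  · rintro ⟨hoff, hle⟩ x hx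
    rcases lt_or_gt_of_ne (hoff x hx) with hlt | hlt
    · exact ⟨⟨x.swap, hlt⟩, hle _ (Or.inr hx), Or.inr rfl⟩
    · exact ⟨⟨x, hlt⟩, hle _ (Or.inl hx), Or.inl rfl⟩

/-- `D` is a set `A ⊙ B` off the diagonal for which `u^ss_{AB}` is a generator of `J^ss_w`. -/
structure IsGenerating (n : ℕ) (w : Perm ℕ) (D : Finset (Fin n × Fin n)) : Prop where
  chain : IsChain (fun x y => x.1 < y.1 ∧ y.2 < x.2) (D : Set (Fin n × Fin n))
  off_diag : ∀ x ∈ D, x.1 ≠ x.2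
  exists_box : ∃ i j, 1 ≤ j ∧ j ≤ i ∧ i ≤ n ∧ (∀ x ∈ D, x.1 + 1 ≤ i ∧ x.2 + 1 ≤ j) ∧
    #D = rnk w i j + 1

lemma exists_isGenerating_iff (hz : IsFPFInvolution z) :
    (∃ D, IsGenerating n z D ∧ pairExponent D ≤ m) ↔ ¬RankBounded (supportRel m) n z := by
  constructor
  · rintro ⟨D, ⟨hchain, hoff, i, j, -, hji, hin, hbox, hcard⟩, hle⟩ hb
    have hC := isAntidiagChain_map_boxEmb_iff.2
      ⟨hchain, hbox, forall_supportRel_iff.2 ⟨hoff, hle⟩⟩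
    have := hC.card_le.trans (hb i hin j (hji.trans hin))
    rw [card_map] at this
    omega
  · intro hb
    obtain ⟨i, j, hji, hin, hlt⟩ := exists_rnk_lt_of_not_rankBounded hz hb
    obtain ⟨C, hC, hcard⟩ := le_antidiagRank_iff.1 hlt
    obtain ⟨D, rfl⟩ := exists_map_boxEmb_eq (n := n) (hC.subset.trans
      (product_subset_product (Icc_subset_Icc_right hin) (Icc_subset_Icc_right (hji.trans hin))))
    obtain ⟨x, hx⟩ := card_pos.1 (hcard ▸ Nat.succ_pos _)
    have hj : 1 ≤ j := (hC.bounds hx).2.1.trans (hC.bounds hx).2.2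
    obtain ⟨hchain, hbox, hrel⟩ := isAntidiagChain_map_boxEmb_iff.1 hC
    obtain ⟨hoff, hle⟩ := forall_supportRel_iff.1 hrel
    exact ⟨D, ⟨hchain, hoff, i, j, hj, hji, hin, hbox, by rwa [card_map] at hcard⟩, hle⟩

variable {K : Type*} [CommRing K]

lemma ussMon_eq_monomial {A B : Finset (Fin n)} (h : #A = #B)
    (hoff : ∀ x ∈ antidiag A B h, x.1 ≠ x.2) :
    ussMon K A B = MvPolynomial.monomial (pairExponent (antidiag A B h)) 1 := by
  have hnot : ¬∃ t : Fin #A, A.orderEmbOfFin rfl t = B.orderEmbOfFin h.symm t.rev :=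
    fun ⟨t, ht⟩ => hoff _ (mem_image_of_mem _ (mem_univ t)) ht
  rw [ussMon, dif_pos h, if_neg hnot, pairExponent, MvPolynomial.monomial_sum_one]
  refine prod_congr (filter_congr fun v _ => ?_) fun v _ => rfl
  simp [antidiag, Prod.ext_iff, exists_or]

lemma ussMon_eq_zero {A B : Finset (Fin n)} (h : #A = #B)
    (hdiag : ¬∀ x ∈ antidiag A B h, x.1 ≠ x.2) : ussMon K A B = 0 := by
  have hex : ∃ t : Fin #A, A.orderEmbOfFin rfl t = B.orderEmbOfFin h.symm t.rev := by
    simpa [antidiag] using hdiag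
  rw [ussMon, dif_pos h, if_pos hex]

lemma JssIdeal_eq_span (w : Perm ℕ) : JssIdeal K n w = Ideal.span
    ((fun s => MvPolynomial.monomial s 1) '' (pairExponent '' {D | IsGenerating n w D})) := by
  refine le_antisymm (Ideal.span_le.2 ?_) (Ideal.span_le.2 ?_)
  · rintro g ⟨i, j, A, B, hj, hji, hin, hA, hB, hcardA, hcardB, rfl⟩
    have h : #A = #B := hcardA.trans hcardB.symm
    by_cases hoff : ∀ x ∈ antidiag A B h, x.1 ≠ x.2
    · rw [ussMon_eq_monomial h hoff]
      refine Ideal.subset_span ⟨_, ⟨_, ⟨isChain_antidiag h, hoff, i, j, hj, hji, hin,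
        fun x hx => ?_, (card_antidiag h).trans hcardA⟩, rfl⟩, rfl⟩
      obtain ⟨hxA, hxB⟩ := mem_product.1 (antidiag_subset_product h hx)
      exact ⟨hA _ hxA, hB _ hxB⟩
    · rw [ussMon_eq_zero h hoff]
      exact Ideal.zero_mem _
  · rintro - ⟨-, ⟨D, ⟨hchain, hoff, i, j, hj, hji, hin, hbox, hcard⟩, rfl⟩, rfl⟩
    obtain ⟨h, hD⟩ := exists_antidiag_eq_of_isChain hchain
    have hcardA : #(D.image Prod.fst) = rnk w i j + 1 := by rw [← card_antidiag h, hD, hcard]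
    refine Ideal.subset_span ⟨i, j, _, _, hj, hji, hin, fun a ha => ?_, fun b hb => ?_, hcardA,
      h ▸ hcardA, ?_⟩
    · obtain ⟨x, hx, rfl⟩ := mem_image.1 ha
      exact (hbox x hx).1
    · obtain ⟨x, hx, rfl⟩ := mem_image.1 hb
      exact (hbox x hx).2
    · rw [ussMon_eq_monomial h (by rwa [hD]), hD]

variable {f : MvPolynomial (SSVar n) K}

theorem mem_JssIdeal_iff (hz : IsFPFInvolution z) :
    f ∈ JssIdeal K n z ↔ ∀ m ∈ f.support, ¬RankBounded (supportRel m) n z := by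
  rw [JssIdeal_eq_span, MvPolynomial.mem_ideal_span_monomial_image]
  simp only [Set.exists_mem_image, Set.mem_ofPred_eq, exists_isGenerating_iff hz]

theorem mem_JssIdeal_add_span_X_iff (hz : IsFPFInvolution z) {u : SSVar n} :
    f ∈ JssIdeal K n z + Ideal.span {MvPolynomial.X u} ↔
      ∀ m ∈ f.support, ¬RankBounded (supportRel m) n z ∨ u ∈ m.support := by
  have span_X : ({MvPolynomial.X u} : Set (MvPolynomial (SSVar n) K)) =
      (fun s => MvPolynomial.monomial s 1) '' {Finsupp.single u 1} := by
    rw [Set.image_singleton]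
    rfl
  rw [JssIdeal_eq_span, span_X, Ideal.add_eq_sup, ← Ideal.span_union, ← Set.image_union,
    MvPolynomial.mem_ideal_span_monomial_image]
  refine forall₂_congr fun m _ => ?_
  rw [← exists_isGenerating_iff hz]
  simp only [Set.mem_union, or_and_right, exists_or, Set.exists_mem_image, Set.mem_ofPred_eq,
    Set.mem_singleton_iff, exists_eq_left, Finsupp.single_le_iff, Nat.one_le_iff_ne_zero,
    Finsupp.mem_support_iff]

end Monomials

section OuterCorners

variable {z v w : Perm ℕ} {n p q : ℕ}

lemma rnk_eq_zero_iff (hw : w 0 = 0) {i j : ℕ} : rnk w i j = 0 ↔ ∀ a, 1 ≤ a → a ≤ i → j < w a := by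
  simp only [rnk, card_eq_zero, filter_eq_empty_iff, mem_Icc, and_imp, not_and, not_le]
  exact forall₃_congr fun a ha _ => ⟨fun h => h ((apply_pos_iff hw).2 ha), fun h _ => h⟩

lemma IsOuterCorner.lt_apply (hw : w 0 = 0) (h : IsOuterCorner w p q) {a : ℕ} (ha : 1 ≤ a)
    (hap : a < p) : q < w a := by
  obtain ⟨-, -, -, rfl | hdom, -⟩ := h
  · omega
  · exact (rnk_eq_zero_iff hw).1 hdom.2.2 a ha (Nat.le_sub_one_of_lt hap)

lemma IsOuterCorner.apply_eq (hw : w 0 = 0) (h : IsOuterCorner w p q) : w p = q := by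
  have le_apply : q ≤ w p := by
    obtain ⟨hp, -, -, -, rfl | hdom⟩ := h
    · exact (apply_pos_iff hw).2 hp
    · exact Nat.le_of_pred_lt ((rnk_eq_zero_iff hw).1 hdom.2.2 p hp le_rfl)
  refine le_antisymm (not_lt.1 fun hlt => h.2.2.1 ⟨h.1, h.2.1, ?_⟩) le_apply
  refine (rnk_eq_zero_iff hw).2 fun a ha hap => ?_
  rcases hap.eq_or_lt with rfl | hap
  · exact hlt
  · exact h.lt_apply hw ha hap

lemma isFPFInvolution_of_mem_PsiSet (hz : z ∈ IFPFInfty) (hp : z p < p) (hv : v ∈ PsiSet z p) :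
    IsFPFInvolution v := by
  obtain ⟨r, hpr, rfl, -⟩ := hv
  exact isFPFInvolution_conjSwap (isFPFInvolution_of_mem_IFPFInfty hz) (by omega) (by omega)

lemma rnk_le_of_mem_PsiSet (hz : z ∈ IFPFInfty) (hp : z p < p) (hv : v ∈ PsiSet z p) (i j : ℕ) :
    rnk v i j ≤ rnk z i j := by
  obtain ⟨r, hcover, -, rfl⟩ := (mem_PsiSet_iff hz hp).1 hv
  have := (isFPFInvolution_of_mem_IFPFInfty hz).rnk_conjSwap hp hcover.1 hcover.2.1 i j
  omega

lemma rnk_eq_zero_of_mem_PsiSet (hz : z ∈ IFPFInfty) (hp : z p < p)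
    (hcorner : ∀ a, 1 ≤ a → a < p → z p < z a) (hv : v ∈ PsiSet z p) : rnk v p (z p) = 0 := by
  obtain ⟨r, hcover, -, rfl⟩ := (mem_PsiSet_iff hz hp).1 hv
  have hrnk := (isFPFInvolution_of_mem_IFPFInfty hz).rnk_conjSwap hp hcover.1 hcover.2.1 p (z p)
  rw [if_pos ⟨⟨le_rfl, hcover.1⟩, le_rfl, hcover.2.1⟩] at hrnk
  have subset_singleton : {a ∈ Icc 1 p | z a ∈ Icc 1 (z p)} ⊆ {p} := fun a ha => by
    rw [mem_filter, mem_Icc, mem_Icc] at ha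
    exact mem_singleton.2 (ha.1.2.eq_or_lt.resolve_right fun hap =>
      (hcorner a ha.1.1 hap).not_ge ha.2.2)
  have : rnk z p (z p) ≤ 1 := card_le_card subset_singleton
  omega

lemma RankBounded.mono {S : ℕ → ℕ → Prop} (hvw : ∀ i j, rnk v i j ≤ rnk w i j)
    (hv : RankBounded S n v) : RankBounded S n w :=
  fun i hi j hj => (hv i hi j hj).trans (hvw i j)

lemma RankBounded.not_rel {S : ℕ → ℕ → Prop} (hv : RankBounded S n v) (hp : 1 ≤ p) (hpn : p ≤ n)
    (hq : 1 ≤ q) (hqn : q ≤ n) (h0 : rnk v p q = 0) : ¬S p q := fun hS =>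
  ((one_le_antidiagRank hp le_rfl hq le_rfl hS).trans (hv p hpn q hqn)).not_gt (by omega)

end OuterCorners

section VanishingIdeals

variable {K : Type*} [Field K] {n p q : ℕ} {z v : Perm ℕ}

lemma eq_zero_of_rank_eq_zero {ι κ : Type*} [Fintype κ] [Finite ι] {A : Matrix ι κ K}
    (h : A.rank = 0) : A = 0 := by
  classical
  rw [Matrix.rank, Submodule.finrank_eq_zero, LinearMap.range_eq_bot,
    ← Matrix.toLin'_apply'] at h
  exact (LinearEquiv.map_eq_zero_iff Matrix.toLin').1 h

lemma IXss_le_IXss (hvz : ∀ i j, rnk v i j ≤ rnk z i j) : IXss K n z ≤ IXss K n v :=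
  fun _ hf A hA => hf A ⟨hA.1, fun i j hi hj hi1 hj1 => (hA.2 i j hi hj hi1 hj1).trans (hvz i j)⟩

lemma X_ssvar_mem_IXss (hp : p ≤ n) (hq : 1 ≤ q) (hqp : q < p) (h0 : rnk v p q = 0) :
    MvPolynomial.X (ssvar p q hp hq hqp) ∈ IXss K n v := by
  intro A hA
  have hrank := hA.2 p q hp (hqp.le.trans hp) (hq.trans hqp.le) hq
  rw [h0, Nat.le_zero] at hrank
  rw [MvPolynomial.eval_X]
  exact congrFun₂ (eq_zero_of_rank_eq_zero hrank) ⟨p - 1, by omega⟩ ⟨q - 1, by omega⟩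

end VanishingIdeals

variable {n p q : ℕ} {z : Perm ℕ}

theorem IXss_add_span_X_le_iInf_PsiSet (K : Type*) [Field K] (hz : z ∈ IFPFInfty)
    (hoc : IsOuterCorner z p q) (hpn : p ≤ n) (hqp : q < p) (hq : 1 ≤ q) :
    IXss K n z + Ideal.span {MvPolynomial.X (ssvar p q hpn hq hqp)} ≤
      ⨅ v ∈ PsiSet z p, IXss K n v := by
  obtain rfl := hoc.apply_eq hz.1
  refine le_iInf₂ fun v hv => sup_le (IXss_le_IXss (rnk_le_of_mem_PsiSet hz hqp hv)) ?_
  rw [Ideal.span_singleton_le_iff_mem]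
  exact X_ssvar_mem_IXss hpn hq hqp
    (rnk_eq_zero_of_mem_PsiSet hz hqp (fun _ => hoc.lt_apply hz.1) hv)

theorem JssIdeal_add_span_X_eq_iInf_PsiSet (K : Type*) [CommRing K] (hz : z ∈ IFPFInfty)
    (hoc : IsOuterCorner z p q) (hpn : p ≤ n) (hqp : q < p) (hq : 1 ≤ q) :
    JssIdeal K n z + Ideal.span {MvPolynomial.X (ssvar p q hpn hq hqp)} =
      ⨅ v ∈ PsiSet z p, JssIdeal K n v := by
  obtain rfl := hoc.apply_eq hz.1
  have hcorner (a : ℕ) (ha : 1 ≤ a) (hap : a < p) : z p < z a := hoc.lt_apply hz.1 ha hap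
  ext f
  rw [mem_JssIdeal_add_span_X_iff (isFPFInvolution_of_mem_IFPFInfty hz)]
  simp only [Submodule.mem_iInf, ← supportRel_iff_ssvar_mem_support]
  constructor
  · intro hf v hv
    refine (mem_JssIdeal_iff (isFPFInvolution_of_mem_PsiSet hz hqp hv)).2 fun m hm hbound => ?_
    rcases hf m hm with hunbound | hrel
    · exact hunbound (hbound.mono (rnk_le_of_mem_PsiSet hz hqp hv))
    · exact hbound.not_rel (hq.trans hqp.le) hpn hq (hqp.le.trans hpn)
        (rnk_eq_zero_of_mem_PsiSet hz hqp hcorner hv) hrel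
  · intro hf m hm
    refine or_iff_not_imp_left.2 fun hbound => ?_
    exact (not_not.1 hbound).rel_corner hz hqp hpn hcorner fun v hv =>
      (mem_JssIdeal_iff (isFPFInvolution_of_mem_PsiSet hz hqp hv)).1 (hf v hv) m hm

theorem statement15_general (K : Type*) [Field K] (n : ℕ) (z : Equiv.Perm ℕ) (hz : z ∈ FPFIn n)
    (p q : ℕ) (hoc : IsOuterCorner z p q) (hpn : p ≤ n) (hqp : q < p) (hq1 : 1 ≤ q) :
    PsiSet z p ⊆ FPFIn n ∧
      (IXss K n z + Ideal.span {MvPolynomial.X (ssvar p q hpn hq1 hqp)} ≤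
        ⨅ v ∈ PsiSet z p, IXss K n v) ∧
      (JssIdeal K n z + Ideal.span {MvPolynomial.X (ssvar p q hpn hq1 hqp)} =
        ⨅ v ∈ PsiSet z p, JssIdeal K n v) :=
  ⟨PsiSet_subset_FPFIn hz (by rwa [hoc.apply_eq hz.1.1]) hpn,
    IXss_add_span_X_le_iInf_PsiSet K hz.1 hoc hpn hqp hq1,
    JssIdeal_add_span_X_eq_iInf_PsiSet K hz.1 hoc hpn hqp hq1⟩

/-- Let `z ∈ FPF_n(I_n)` and let `(p,q)` be an outer corner of
`dom(z)` with `n ≥ p > q`. Then: (1) `Ψ(z,p) ⊆ FPF_n(I_n)`;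
(2) `I(X^ss_z) + (u_{pq}) ⊆ ⋂_{v ∈ Ψ(z,p)} I(X^ss_v)`; and
(3) `J^ss_z + (u_{pq}) = ⋂_{v ∈ Ψ(z,p)} J^ss_v`. -/
theorem statement15 (K : Type*) [Field K] [IsAlgClosed K] (n : ℕ) (hn : 1 ≤ n)
    (z : Equiv.Perm ℕ) (hz : z ∈ FPFIn n) (p q : ℕ) (hoc : IsOuterCorner z p q)
    (hpn : p ≤ n) (hqp : q < p) (hq1 : 1 ≤ q) :
    PsiSet z p ⊆ FPFIn n ∧
      (IXss K n z + Ideal.span {MvPolynomial.X (ssvar p q hpn hq1 hqp)} ≤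
        ⨅ v ∈ PsiSet z p, IXss K n v) ∧
      (JssIdeal K n z + Ideal.span {MvPolynomial.X (ssvar p q hpn hq1 hqp)} =
        ⨅ v ∈ PsiSet z p, JssIdeal K n v) :=
  statement15_general K n z hz p q hoc hpn hqp hq1

end Paper
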